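/- arXiv:1101.3299 — 2 statements merged into one kernel-verified Lean document; each statement's English description precedes it below -/
import Mathlib

section
/- Let Ω = ℂ*×ℂ. Let ψ₁,…,ψ_k be holomorphic automorphisms of Ω such that for each j = 1,…,k there is a map θ_j : [0,1] × Ω → Ω of class C² (in all real variables jointly) with θ_j(t,·) a holomorphic automorphism of Ω for every t ∈ [0,1], θ_j(0,·) = id_Ω, and θ_j(1,·) = ψ_j. Then for any distinct points a₁,…,a_k ∈ ℂ∖{0}, any compact set K ⊂ Ω, and any ε > 0, there exists a holomorphic map Ψ : ℂ × Ω → Ω such that: (i) Ψ(ζ,·) is a holomorphic automorphism of Ω for every ζ ∈ ℂ; (ii) Ψ(0,·) = id_Ω; and (iii) sup_{x∈K} ‖Ψ(a_j,x) − ψ_j(x)‖ < ε for j = 1,…,k. -/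
/-!
The proof is of Andersén–Lempert type. Write `Ω = ℂ* × ℂ`, with coordinates `(z, w)`. A *family*
(`IsFam`) is a holomorphic map `F : ℂ × Ω → Ω` such that every `F (ζ, ·)` is an automorphism and
`F (0, ·) = id`. If `F` and `G` are families and `p` is entire with `p 0 = 0`, then
`(ζ, x) ↦ F (p ζ, G (ζ, x))` is a family (`IsFam.comp`).

*Velocities.* Composition and linear reparametrization show that the velocities `∂F/∂ζ (0, ·)` of
families form a vector space of holomorphic vector fields. Every holomorphic vector field on `Ω` is
a locally uniform limit of such velocities (`apx_of_differentiableOn`). Indeed the fields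
`z w ^ n ∂_z` and `z w ^ n (n z ∂_z - w ∂_w)` have explicit flows. Velocities are preserved by the
shears `(z, w) ↦ (z, w + c g(z))` with `g` holomorphic on `ℂ*`, and differentiating the
push-forwards at `c = 0` amounts to taking brackets with `g(z) ∂_w`; combinations of these brackets
give all fields `G(z) w ^ n ∂_w` and `G(z) w ^ n ∂_z` (`apx_vertical`, `apx_horizontal`). Taylor
expansion in `w` does the rest.

*Following an isotopy.* Let `θ` be a `C²` isotopy with `θ (0, ·) = id`. Its velocity pulled back to
the source, that is the solution `Z` of `D_yθ(t, y) Z(y) = ∂_tθ(t, y)`, is holomorphic in `y`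
(`exists_field`). If `F` is a family whose velocity is close to `Z` on a compact set, then
`θ (t - s, F (s, y))` has small derivative in `s` for `t` close to a given time (`local_step`).
Subdividing `[0, 1]` and composing finitely many families, the point
`θ (t, F (1, x))` stays close to `θ (1, x)` while `t` decreases from `1` to `0`, so that the final
family satisfies `F (1, x) ≈ θ (1, x)` on `K` (`exists_family`). That the intermediate points
`F (1, x)` remain in a fixed compact set is the properness of `θ` over `[0, 1]`
(`exists_compact`), which follows from the continuity in `t` of the inverses of `θ (t, ·)`.

*Interpolation.* The families obtained for `ψ₁, …, ψ_k` are composed after reparametrizing the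
`i`-th one by the Lagrange polynomial that is `1` at `a i` and vanishes at `0` and at the other
`a j` (`exists_interpolation`).
-/

open Set

noncomputable section

/-- ℂ² with the Euclidean norm. -/
abbrev E2 : Type := EuclideanSpace ℂ (Fin 2)

/-- ℂ*×ℂ, i.e. the set of points of ℂ² with nonzero first coordinate. -/
def OmegaStar : Set E2 := {z : E2 | z 0 ≠ 0}

/-- `ψ` restricts to a holomorphic automorphism of the open set `Ω ⊆ ℂ²`:
it maps `Ω` bijectively onto `Ω`, holomorphically with holomorphic inverse. -/
def IsAutOn (Ω : Set E2) (ψ : E2 → E2) : Prop :=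
  DifferentiableOn ℂ ψ Ω ∧ MapsTo ψ Ω Ω ∧
  ∃ χ : E2 → E2, DifferentiableOn ℂ χ Ω ∧ MapsTo χ Ω Ω ∧
    (∀ z ∈ Ω, χ (ψ z) = z) ∧ (∀ z ∈ Ω, ψ (χ z) = z)

/-! ### Families of automorphisms and their velocities -/

/-- A holomorphic one-parameter family of automorphisms of `ℂ* × ℂ` through the identity, the
parameter ranging over `ℂ`. It is not required to be a one-parameter group, so families can be
composed. `ContDiffOn ℂ 1` rather than mere complex differentiability makes the derivative
continuous by definition. -/
def IsFam (F : ℂ × E2 → E2) : Prop :=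
  ContDiffOn ℂ 1 F (univ ×ˢ OmegaStar) ∧ (∀ ζ : ℂ, IsAutOn OmegaStar (fun z => F (ζ, z))) ∧
    ∀ z ∈ OmegaStar, F (0, z) = z

/-- The vector field `V` on `ℂ* × ℂ` is the velocity at `ζ = 0` of a holomorphic family of
automorphisms. -/
def Gen (V : E2 → E2) : Prop :=
  ∃ F, IsFam F ∧ ∀ x ∈ OmegaStar, HasDerivAt (fun ζ => F (ζ, x)) (V x) 0

/-- The vector field `V` is a limit, uniformly on compact subsets of `ℂ* × ℂ`, of velocities of
holomorphic families of automorphisms. -/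
def Apx (V : E2 → E2) : Prop :=
  ∀ K : Set E2, IsCompact K → K ⊆ OmegaStar → ∀ ε > 0, ∃ W, Gen W ∧ ∀ x ∈ K, ‖W x - V x‖ ≤ ε

lemma isOpen_omega : IsOpen OmegaStar := by
  have : Continuous (fun z : E2 => z 0) := by fun_prop
  exact isOpen_ne.preimage this

lemma isOpen_prod : IsOpen ((univ : Set ℂ) ×ˢ OmegaStar) := isOpen_univ.prod isOpen_omega

lemma IsFam.mapsTo {F : ℂ × E2 → E2} (hF : IsFam F) : MapsTo F (univ ×ˢ OmegaStar) OmegaStar :=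
  fun p hp => (hF.2.1 p.1).2.1 hp.2

lemma IsFam.mem {F : ℂ × E2 → E2} (hF : IsFam F) (ζ : ℂ) {x : E2} (hx : x ∈ OmegaStar) :
    F (ζ, x) ∈ OmegaStar := (hF.2.1 ζ).2.1 hx

lemma IsAutOn.comp {φ ψ : E2 → E2} (hφ : IsAutOn OmegaStar φ) (hψ : IsAutOn OmegaStar ψ) :
    IsAutOn OmegaStar (fun z => φ (ψ z)) := by
  obtain ⟨h1, h2, χ, h3, h4, h5, h6⟩ := hφ
  obtain ⟨k1, k2, κ, k3, k4, k5, k6⟩ := hψ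
  refine ⟨h1.comp k1 k2, h2.comp k2, fun z => κ (χ z), k3.comp h3 h4, k4.comp h4, ?_, ?_⟩
  · intro z hz
    simp only
    rw [h5 _ (k2 hz), k5 z hz]
  · intro z hz
    simp only
    rw [k6 _ (h4 hz), h6 z hz]

lemma isFam_id : IsFam (fun p => p.2) :=
  ⟨contDiff_snd.contDiffOn, fun _ => ⟨differentiableOn_id, fun _ h => h, id, differentiableOn_id,
    fun _ h => h, fun _ _ => rfl, fun _ _ => rfl⟩, fun _ _ => rfl⟩

/-- Families may be composed after holomorphic changes of the parameter fixing `0`. -/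
lemma IsFam.comp {F G : ℂ × E2 → E2} (hF : IsFam F) (hG : IsFam G) {p : ℂ → ℂ}
    (hp : Differentiable ℂ p) (hp0 : p 0 = 0) : IsFam (fun q => F (p q.1, G q)) := by
  refine ⟨?_, fun ζ => (hF.2.1 (p ζ)).comp (hG.2.1 ζ), fun z hz => ?_⟩
  · have h1 : ContDiffOn ℂ 1 (fun q : ℂ × E2 => (p q.1, G q)) (univ ×ˢ OmegaStar) :=
      ((hp.contDiff.comp contDiff_fst).contDiffOn).prodMk hG.1
    exact hF.1.comp h1 (fun q hq => ⟨mem_univ _, hG.mapsTo hq⟩)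
  · simp only [hp0]
    rw [hG.2.2 z hz, hF.2.2 z hz]

lemma IsFam.hasFDerivAt {F : ℂ × E2 → E2} (hF : IsFam F) (ζ : ℂ) {x : E2} (hx : x ∈ OmegaStar) :
    HasFDerivAt F (fderiv ℂ F (ζ, x)) (ζ, x) :=
  ((hF.1.differentiableOn one_ne_zero).differentiableAt
    (isOpen_prod.mem_nhds ⟨mem_univ _, hx⟩)).hasFDerivAt

lemma IsFam.hasDerivAt {F : ℂ × E2 → E2} (hF : IsFam F) (ζ : ℂ) {x : E2} (hx : x ∈ OmegaStar) :
    HasDerivAt (fun ζ => F (ζ, x)) (fderiv ℂ F (ζ, x) (1, 0)) ζ :=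
  (hF.hasFDerivAt ζ hx).comp_hasDerivAt ζ ((hasDerivAt_id ζ).prodMk (hasDerivAt_const ζ x))

/-- At `ζ = 0` a family is the identity, hence so is its derivative in the space variable. -/
lemma IsFam.fderiv_snd {F : ℂ × E2 → E2} (hF : IsFam F) {x : E2} (hx : x ∈ OmegaStar) (v : E2) :
    fderiv ℂ F (0, x) (0, v) = v := by
  have h1 : HasFDerivAt (fun y => F (0, y))
      ((fderiv ℂ F (0, x)).comp (ContinuousLinearMap.inr ℂ ℂ E2)) x :=
    (hF.hasFDerivAt 0 hx).comp x (hasFDerivAt_prodMk_right 0 x)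
  have h2 : HasFDerivAt (fun y => F (0, y)) (ContinuousLinearMap.id ℂ E2) x := by
    refine (hasFDerivAt_id x).congr_of_eventuallyEq ?_
    filter_upwards [isOpen_omega.mem_nhds hx] with y hy using hF.2.2 y hy
  have := congrArg (fun L : E2 →L[ℂ] E2 => L v) (h1.unique h2)
  simpa using this

lemma Gen.congr {V W : E2 → E2} (hV : Gen V) (h : ∀ x ∈ OmegaStar, V x = W x) : Gen W := by
  obtain ⟨F, hF, h1⟩ := hV
  exact ⟨F, hF, fun x hx => h x hx ▸ h1 x hx⟩

/-- The velocity of a composition of two families is the sum of their velocities. -/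
lemma Gen.add {V W : E2 → E2} (hV : Gen V) (hW : Gen W) : Gen (fun x => V x + W x) := by
  obtain ⟨F, hF, h1⟩ := hV
  obtain ⟨G, hG, h2⟩ := hW
  refine ⟨_, hF.comp hG differentiable_id rfl, fun x hx => ?_⟩
  have e : G (0, x) = x := hG.2.2 x hx
  have h3 : HasFDerivAt F (fderiv ℂ F (0, x)) ((fun ζ : ℂ => (ζ, G (ζ, x))) 0) := by
    simpa only [e] using hF.hasFDerivAt 0 hx
  have h4 := h3.comp_hasDerivAt (0 : ℂ) ((hasDerivAt_id (0 : ℂ)).prodMk (h2 x hx))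
  have h5 : fderiv ℂ F (0, x) (1, W x) = V x + W x := by
    have : ((1 : ℂ), W x) = (1, 0) + (0, W x) := by simp
    rw [this, map_add, hF.fderiv_snd hx, (hF.hasDerivAt 0 hx).unique (h1 x hx)]
  rw [h5] at h4
  exact h4

lemma Gen.smul {V : E2 → E2} (hV : Gen V) (c : ℂ) : Gen (fun x => c • V x) := by
  obtain ⟨F, hF, h1⟩ := hV
  refine ⟨_, hF.comp isFam_id (p := fun ζ => c * ζ) (by fun_prop) (by simp), fun x hx => ?_⟩
  have h2 : HasDerivAt (fun ζ : ℂ => c * ζ) c 0 := by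
    simpa using (hasDerivAt_id (0 : ℂ)).const_mul c
  have h3 : HasDerivAt (fun ζ => F (ζ, x)) (V x) (c * 0) := by simpa using h1 x hx
  exact h3.scomp (0 : ℂ) h2

lemma Gen.apx {V : E2 → E2} (hV : Gen V) : Apx V :=
  fun _ _ _ ε hε => ⟨V, hV, fun x _ => by simpa using hε.le⟩

lemma Apx.congr {V W : E2 → E2} (hV : Apx V) (h : ∀ x ∈ OmegaStar, V x = W x) : Apx W := by
  intro K hK hKΩ ε hε
  obtain ⟨U, hU, h1⟩ := hV K hK hKΩ ε hε
  exact ⟨U, hU, fun x hx => h x (hKΩ hx) ▸ h1 x hx⟩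

lemma Apx.add {V W : E2 → E2} (hV : Apx V) (hW : Apx W) : Apx (fun x => V x + W x) := by
  intro K hK hKΩ ε hε
  obtain ⟨U, hU, h1⟩ := hV K hK hKΩ (ε / 2) (by positivity)
  obtain ⟨U', hU', h2⟩ := hW K hK hKΩ (ε / 2) (by positivity)
  refine ⟨_, hU.add hU', fun x hx => ?_⟩
  calc ‖U x + U' x - (V x + W x)‖ = ‖(U x - V x) + (U' x - W x)‖ := by congr 1; abel
    _ ≤ ε / 2 + ε / 2 := (norm_add_le _ _).trans (add_le_add (h1 x hx) (h2 x hx))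
    _ = ε := by ring

lemma Apx.smul {V : E2 → E2} (hV : Apx V) (c : ℂ) : Apx (fun x => c • V x) := by
  intro K hK hKΩ ε hε
  obtain ⟨U, hU, h1⟩ := hV K hK hKΩ (ε / (‖c‖ + 1)) (by positivity)
  refine ⟨_, hU.smul c, fun x hx => ?_⟩
  rw [← smul_sub, norm_smul]
  have := h1 x hx
  calc ‖c‖ * ‖U x - V x‖ ≤ (‖c‖ + 1) * (ε / (‖c‖ + 1)) := by
        gcongr
        linarith
    _ = ε := by field_simp

lemma Apx.sum {V : ℕ → E2 → E2} (hV : ∀ n, Apx (V n)) (N : ℕ) :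
    Apx (fun x => ∑ n ∈ Finset.range N, V n x) := by
  induction N with
  | zero =>
    have h0 : Gen (fun _ => 0) := ⟨_, isFam_id, fun x _ => hasDerivAt_const _ _⟩
    exact h0.apx.congr (by simp)
  | succ N ih => exact (ih.add (hV N)).congr (fun x _ => by simp [Finset.sum_range_succ])

/-- Fields that can be approximated form a set closed under locally uniform limits. -/
lemma Apx.of_forall {V : E2 → E2} (h : ∀ K : Set E2, IsCompact K → K ⊆ OmegaStar → ∀ ε > 0,
    ∃ W, Apx W ∧ ∀ x ∈ K, ‖W x - V x‖ ≤ ε) : Apx V := by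
  intro K hK hKΩ ε hε
  obtain ⟨W, hW, h1⟩ := h K hK hKΩ (ε / 2) (by positivity)
  obtain ⟨U, hU, h2⟩ := hW K hK hKΩ (ε / 2) (by positivity)
  refine ⟨U, hU, fun x hx => ?_⟩
  calc ‖U x - V x‖ = ‖(U x - W x) + (W x - V x)‖ := by congr 1; abel
    _ ≤ ε / 2 + ε / 2 := (norm_add_le _ _).trans (add_le_add (h2 x hx) (h1 x hx))
    _ = ε := by ring

/-- If the approximable fields `W c` depend on a parameter as `W c = V + c Q (c, ·)`, then their
derivative `Q (0, ·)` at `c = 0` is approximable, being the limit of difference quotients. -/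
lemma Apx.of_param {V : E2 → E2} {W : ℂ → E2 → E2} {Q : ℂ × E2 → E2} (hV : Apx V)
    (hW : ∀ c, Apx (W c)) (hQ : ContinuousOn Q (univ ×ˢ OmegaStar))
    (h : ∀ c, ∀ x ∈ OmegaStar, W c x = V x + c • Q (c, x)) : Apx (fun x => Q (0, x)) := by
  refine Apx.of_forall fun K hK hKΩ ε hε => ?_
  have h1 : ∀ᶠ c : ℂ in nhds 0, ∀ y ∈ K, ‖Q (c, y) - Q (0, y)‖ < ε := by
    refine hK.eventually_forall_of_forall_eventually (P := fun c y => ‖Q (c, y) - Q (0, y)‖ < ε)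
      fun y hy => ?_
    have hyΩ : ((0 : ℂ), y) ∈ (univ : Set ℂ) ×ˢ OmegaStar := ⟨mem_univ _, hKΩ hy⟩
    have c1 : ContinuousAt Q (0, y) := hQ.continuousAt (isOpen_prod.mem_nhds hyΩ)
    have c2 : ContinuousAt (fun z : ℂ × E2 => Q (0, z.2)) (0, y) :=
      ContinuousAt.comp (f := fun z : ℂ × E2 => ((0 : ℂ), z.2)) (g := Q) c1 (by fun_prop)
    have c3 := (c1.sub c2).norm
    exact c3.eventually_lt continuousAt_const (by simpa using hε)
  -- a nonzero parameter for which the difference quotient is close to its limit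
  obtain ⟨c, hc, hc0⟩ := ((h1.filter_mono nhdsWithin_le_nhds).and
    (self_mem_nhdsWithin (a := (0 : ℂ)) (s := {0}ᶜ))).exists
  have hc0 : c ≠ 0 := hc0
  refine ⟨fun x => Q (c, x), (((hW c).add (hV.smul (-1))).smul c⁻¹).congr fun x hx => ?_,
    fun x hx => (hc x hx).le⟩
  rw [h c x hx]
  simp [smul_smul, hc0]

/-! ### Complete vector fields and shears -/

/-- A holomorphic map for which `F (-ζ, ·)` is a left inverse of `F (ζ, ·)`, such as a flow, is a
family. -/
lemma IsFam.of_flow {F : ℂ × E2 → E2} (h1 : ContDiffOn ℂ 1 F (univ ×ˢ OmegaStar))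
    (h2 : ∀ ζ, ∀ x ∈ OmegaStar, F (ζ, x) ∈ OmegaStar)
    (h3 : ∀ ζ, ∀ x ∈ OmegaStar, F (-ζ, F (ζ, x)) = x) (h4 : ∀ x ∈ OmegaStar, F (0, x) = x) :
    IsFam F := by
  have hd : ∀ ζ : ℂ, DifferentiableOn ℂ (fun z => F (ζ, z)) OmegaStar := fun ζ =>
    (h1.differentiableOn one_ne_zero).comp (f := fun z : E2 => (ζ, z)) (by fun_prop)
      (fun z hz => ⟨mem_univ _, hz⟩)
  refine ⟨h1, fun ζ => ⟨hd ζ, h2 ζ, fun z => F (-ζ, z), hd _, h2 _, h3 ζ, fun z hz => ?_⟩, h4⟩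
  simpa using h3 (-ζ) z hz

lemma contDiffOn_mk {E : Type*} [NormedAddCommGroup E] [NormedSpace ℂ E] {s : Set E}
    {f g : E → ℂ} (hf : ContDiffOn ℂ 1 f s) (hg : ContDiffOn ℂ 1 g s) :
    ContDiffOn ℂ 1 (fun q => (!₂[f q, g q] : E2)) s := by
  rw [contDiffOn_euclidean]
  intro i
  fin_cases i <;> simpa

lemma continuousOn_mk {E : Type*} [TopologicalSpace E] {s : Set E}
    {f g : E → ℂ} (hf : ContinuousOn f s) (hg : ContinuousOn g s) :
    ContinuousOn (fun q => (!₂[f q, g q] : E2)) s := by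
  refine (PiLp.continuous_toLp 2 _).comp_continuousOn (continuousOn_pi.2 fun i => ?_)
  fin_cases i <;> simpa

lemma HasDerivAt.coord {f : ℂ → E2} {f' : E2} {x : ℂ} (h : HasDerivAt f f' x) (i : Fin 2) :
    HasDerivAt (fun y => f y i) (f' i) x :=
  (EuclideanSpace.proj (𝕜 := ℂ) i).hasFDerivAt.comp_hasDerivAt x h

lemma hasDerivAt_mk {f g : ℂ → ℂ} {f' g' x : ℂ} (hf : HasDerivAt f f' x)
    (hg : HasDerivAt g g' x) :
    HasDerivAt (fun q => (!₂[f q, g q] : E2)) !₂[f', g'] x := by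
  refine (PiLp.continuousLinearEquiv 2 ℂ (fun _ : Fin 2 => ℂ)).symm.hasFDerivAt.comp_hasDerivAt x
    (f := fun q => ![f q, g q]) (f' := ![f', g']) (hasDerivAt_pi.2 fun i => ?_)
  fin_cases i <;> simpa

/-- The field `z w ^ n ∂_z`, whose flow is `(z, w) ↦ (z exp (ζ w ^ n), w)`. -/
lemma gen_horizontal (n : ℕ) : Gen (fun x => !₂[x 0 * x 1 ^ n, 0]) := by
  refine ⟨fun q => !₂[q.2 0 * Complex.exp (q.1 * q.2 1 ^ n), q.2 1],
    IsFam.of_flow ?_ ?_ ?_ ?_, ?_⟩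
  · exact contDiffOn_mk (ContDiff.contDiffOn (by fun_prop)) (ContDiff.contDiffOn (by fun_prop))
  · intro ζ x hx
    have hx : x 0 ≠ 0 := hx
    simp [OmegaStar, hx]
  · intro ζ x hx
    ext i
    fin_cases i
    · simp [mul_assoc, ← Complex.exp_add]
    · simp
  · intro x hx
    ext i
    fin_cases i <;> simp
  · intro x hx
    refine hasDerivAt_mk ?_ (hasDerivAt_const 0 (x 1))
    have h := (((hasDerivAt_id (0 : ℂ)).mul_const (x 1 ^ n)).cexp).const_mul (x 0)
    simpa using h

/-- The field `z w ^ n (n z ∂_z - w ∂_w)`; with `m = z w ^ n`, which is constant along the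
trajectories, its flow is `(z, w) ↦ (z exp (ζ n m), w exp (-ζ m))`. -/
lemma gen_monomial (n : ℕ) :
    Gen (fun x => !₂[n * x 0 ^ 2 * x 1 ^ n, -(x 0 * x 1 ^ (n + 1))]) := by
  refine ⟨fun q => !₂[q.2 0 * Complex.exp (q.1 * (n * (q.2 0 * q.2 1 ^ n))),
    q.2 1 * Complex.exp (-(q.1 * (q.2 0 * q.2 1 ^ n)))],
    IsFam.of_flow ?_ ?_ ?_ ?_, ?_⟩
  · exact contDiffOn_mk (ContDiff.contDiffOn (by fun_prop)) (ContDiff.contDiffOn (by fun_prop))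
  · intro ζ x hx
    have hx : x 0 ≠ 0 := hx
    simp [OmegaStar, hx]
  · intro ζ x hx
    -- the monomial `x 0 * x 1 ^ n` is a first integral
    have key : x 0 * Complex.exp (ζ * (n * (x 0 * x 1 ^ n))) *
        (x 1 * Complex.exp (-(ζ * (x 0 * x 1 ^ n)))) ^ n = x 0 * x 1 ^ n := by
      rw [mul_pow, ← Complex.exp_nat_mul]
      calc _ = x 0 * x 1 ^ n * (Complex.exp (ζ * (n * (x 0 * x 1 ^ n))) *
          Complex.exp (n * -(ζ * (x 0 * x 1 ^ n)))) := by ring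
        _ = _ := by
          rw [← Complex.exp_add]
          ring_nf
          simp
    ext i
    fin_cases i
    · simp [key, mul_assoc, ← Complex.exp_add]
    · simp [key, mul_assoc, ← Complex.exp_add]
  · intro x hx
    ext i
    fin_cases i <;> simp
  · intro x hx
    refine hasDerivAt_mk ?_ ?_
    · have h := (((hasDerivAt_id (0 : ℂ)).mul_const (n * (x 0 * x 1 ^ n))).cexp).const_mul (x 0)
      refine h.congr_deriv ?_
      simp
      ring
    · have h := (((hasDerivAt_id (0 : ℂ)).mul_const (x 0 * x 1 ^ n)).neg.cexp).const_mul (x 1)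
      refine h.congr_deriv ?_
      simp
      ring

/-- The shear `(z, w) ↦ (z, w + c g(z))`, an automorphism of `ℂ* × ℂ` if `g` is holomorphic on
`ℂ*`. -/
def shear (g : ℂ → ℂ) (c : ℂ) (x : E2) : E2 := !₂[x 0, x 1 + c * g (x 0)]

lemma contDiffOn_coord {g : ℂ → ℂ} (hg : DifferentiableOn ℂ g {0}ᶜ) :
    ContDiffOn ℂ 1 (fun x : E2 => g (x 0)) OmegaStar :=
  (hg.contDiffOn isOpen_compl_singleton).comp (f := fun x : E2 => x 0)
    (ContDiff.contDiffOn (by fun_prop)) (fun _ hx => hx)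

lemma contDiffOn_shear {g : ℂ → ℂ} (hg : DifferentiableOn ℂ g {0}ᶜ) (c : ℂ) :
    ContDiffOn ℂ 1 (shear g c) OmegaStar :=
  contDiffOn_mk (ContDiff.contDiffOn (by fun_prop))
    ((ContDiff.contDiffOn (by fun_prop)).add (contDiffOn_const.mul (contDiffOn_coord hg)))

lemma shear_neg (g : ℂ → ℂ) (c : ℂ) (x : E2) : shear g (-c) (shear g c x) = x := by
  ext i
  fin_cases i <;> simp [shear]

lemma isAutOn_shear {g : ℂ → ℂ} (hg : DifferentiableOn ℂ g {0}ᶜ) (c : ℂ) :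
    IsAutOn OmegaStar (shear g c) :=
  ⟨(contDiffOn_shear hg c).differentiableOn one_ne_zero, fun _ hx => hx, shear g (-c),
    (contDiffOn_shear hg _).differentiableOn one_ne_zero, fun _ hx => hx,
    fun z _ => shear_neg g c z, fun z _ => by simpa using shear_neg g (-c) z⟩

/-- The push-forward of the velocity of a family by a shear is the velocity of the conjugated
family. -/
lemma Gen.conj_shear {V : E2 → E2} (hV : Gen V) {g : ℂ → ℂ} (hg : DifferentiableOn ℂ g {0}ᶜ) (c : ℂ) :
    Gen (fun x => !₂[V (shear g (-c) x) 0,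
      V (shear g (-c) x) 1 + c * deriv g (x 0) * V (shear g (-c) x) 0]) := by
  obtain ⟨F, hF, h1⟩ := hV
  have hm : ∀ c, MapsTo (shear g c) OmegaStar OmegaStar := fun c _ hx => hx
  refine ⟨fun q => shear g c (F (q.1, shear g (-c) q.2)), ⟨?_, ?_, ?_⟩, ?_⟩
  · have h2 : ContDiffOn ℂ 1 (fun q : ℂ × E2 => (q.1, shear g (-c) q.2))
        (univ ×ˢ OmegaStar) := contDiff_fst.contDiffOn.prodMk
      ((contDiffOn_shear hg _).comp contDiff_snd.contDiffOn fun q hq => hq.2)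
    exact (contDiffOn_shear hg c).comp (hF.1.comp h2 fun q hq => ⟨mem_univ _, hm _ hq.2⟩)
      fun q hq => hF.mem _ (hm _ hq.2)
  · exact fun ζ => (isAutOn_shear hg c).comp ((hF.2.1 ζ).comp (isAutOn_shear hg (-c)))
  · intro z hz
    simp only
    rw [hF.2.2 _ (hm _ hz)]
    simpa using shear_neg g (-c) z
  · intro x hx
    have h2 := h1 _ (hm (-c) hx)
    have h3 := h2.coord
    have e : (F (0, shear g (-c) x)) 0 = x 0 := by
      rw [hF.2.2 _ (hm _ hx)]
      rfl
    have hgd : HasDerivAt g (deriv g (x 0)) (F (0, shear g (-c) x) 0) := by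
      rw [e]
      exact ((hg _ hx).differentiableAt (isOpen_compl_singleton.mem_nhds hx)).hasDerivAt
    have h4 := hgd.comp (0 : ℂ) (h3 0)
    refine (hasDerivAt_mk (h3 0) ((h3 1).add (h4.const_mul c))).congr_deriv ?_
    simp only [mul_assoc]

/-! ### Fields that are monomial in the second variable -/

/-- The quotient `(w ^ n - (w - u) ^ n) / u`, as a polynomial in `w` and `u`, so that its value at
`u = 0` is the derivative of `w ^ n`. -/
def powQuot (n : ℕ) (w u : ℂ) : ℂ := ∑ i ∈ Finset.range n, (w - u) ^ i * w ^ (n - 1 - i)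

lemma sub_pow_eq (n : ℕ) (w u : ℂ) : (w - u) ^ n = w ^ n - u * powQuot n w u := by
  have h := (Commute.all (w - u) w).geom_sum₂_mul n
  rw [powQuot]
  linear_combination -h

lemma powQuot_zero (n : ℕ) (w : ℂ) : powQuot n w 0 = n * w ^ (n - 1) := by
  simp only [powQuot, sub_zero]
  exact geom_sum₂_self w n

lemma continuous_powQuot (n : ℕ) : Continuous (fun p : ℂ × ℂ => powQuot n p.1 p.2) := by
  unfold powQuot
  fun_prop

lemma continuousOn_coord_snd {g : ℂ → ℂ} (hg : DifferentiableOn ℂ g {0}ᶜ) :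
    ContinuousOn (fun q : ℂ × E2 => g (q.2 0)) (univ ×ˢ OmegaStar) :=
  (contDiffOn_coord hg).continuousOn.comp continuousOn_snd fun _ hq => hq.2

lemma continuousOn_powQuot {g : ℂ → ℂ} (hg : DifferentiableOn ℂ g {0}ᶜ) (n : ℕ) :
    ContinuousOn (fun q : ℂ × E2 => powQuot n (q.2 1) (q.1 * g (q.2 0)))
      (univ ×ˢ OmegaStar) := by
  have h1 : ContinuousOn (fun q : ℂ × E2 => q.2 1) (univ ×ˢ OmegaStar) := by fun_prop
  have h2 : ContinuousOn (fun q : ℂ × E2 => (q.2 1, q.1 * g (q.2 0))) (univ ×ˢ OmegaStar) :=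
    h1.prodMk (continuousOn_fst.mul (continuousOn_coord_snd hg))
  have h3 := (continuous_powQuot n).comp_continuousOn h2
  simpa only [Function.comp_def] using h3

/-- The derivative at `c = 0` of the push-forward of `z w ^ n ∂_z` by the shear
`(z, w) ↦ (z, w + c g(z))`; up to sign, its Lie bracket with `g(z) ∂_w`. For `n = 0` the factor
`n` makes the value of the truncated exponent `n - 1` irrelevant. -/
lemma apx_shear_horizontal {g : ℂ → ℂ} (hg : DifferentiableOn ℂ g {0}ᶜ) (n : ℕ) :
    Apx (fun x => !₂[-(x 0 * g (x 0) * (n * x 1 ^ (n - 1))), deriv g (x 0) * x 0 * x 1 ^ n]) := by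
  have hg' : DifferentiableOn ℂ (deriv g) {0}ᶜ := hg.deriv isOpen_compl_singleton
  have c1 := continuousOn_coord_snd hg
  have c2 := continuousOn_coord_snd hg'
  have c3 := continuousOn_powQuot hg n
  have c4 : ContinuousOn (fun q : ℂ × E2 => q.2 0) (univ ×ˢ OmegaStar) := by fun_prop
  have c5 : ContinuousOn (fun q : ℂ × E2 => q.2 1) (univ ×ˢ OmegaStar) := by fun_prop
  have := Apx.of_param (gen_horizontal n).apx (fun c => ((gen_horizontal n).conj_shear hg c).apx)
    (Q := fun q => !₂[-(q.2 0 * g (q.2 0) * powQuot n (q.2 1) (q.1 * g (q.2 0))),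
      deriv g (q.2 0) * q.2 0 * (q.2 1 - q.1 * g (q.2 0)) ^ n])
    (continuousOn_mk ((c4.mul c1).mul c3).neg
      ((c2.mul c4).mul ((c5.sub (continuousOn_fst.mul c1)).pow n))) ?_
  · refine this.congr fun x hx => ?_
    simp [powQuot_zero]
  · intro c x hx
    have e := sub_pow_eq n (x 1) (c * g (x 0))
    ext i
    fin_cases i
    · simp [shear, ← sub_eq_add_neg]
      rw [e]
      ring
    · simp [shear, ← sub_eq_add_neg]
      ring

/-- The derivative at `c = 0` of the push-forward of `z w ^ n (n z ∂_z - w ∂_w)` by the shear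
`(z, w) ↦ (z, w + c g(z))`. -/
lemma apx_shear_monomial {g : ℂ → ℂ} (hg : DifferentiableOn ℂ g {0}ᶜ) (n : ℕ) :
    Apx (fun x => !₂[-(n * x 0 ^ 2 * g (x 0) * (n * x 1 ^ (n - 1))),
      x 0 * g (x 0) * ((n + 1) * x 1 ^ n) + deriv g (x 0) * (n * x 0 ^ 2) * x 1 ^ n]) := by
  have hg' : DifferentiableOn ℂ (deriv g) {0}ᶜ := hg.deriv isOpen_compl_singleton
  have c1 := continuousOn_coord_snd hg
  have c2 := continuousOn_coord_snd hg'
  have c3 := continuousOn_powQuot hg n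
  have c3' := continuousOn_powQuot hg (n + 1)
  have c4 : ContinuousOn (fun q : ℂ × E2 => q.2 0) (univ ×ˢ OmegaStar) := by fun_prop
  have c5 : ContinuousOn (fun q : ℂ × E2 => q.2 1) (univ ×ˢ OmegaStar) := by fun_prop
  have c6 : ContinuousOn (fun q : ℂ × E2 => n * q.2 0 ^ 2) (univ ×ˢ OmegaStar) := by fun_prop
  have := Apx.of_param (gen_monomial n).apx (fun c => ((gen_monomial n).conj_shear hg c).apx)
    (Q := fun q => !₂[-(n * q.2 0 ^ 2 * g (q.2 0) * powQuot n (q.2 1) (q.1 * g (q.2 0))),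
      q.2 0 * g (q.2 0) * powQuot (n + 1) (q.2 1) (q.1 * g (q.2 0)) +
      deriv g (q.2 0) * (n * q.2 0 ^ 2) * (q.2 1 - q.1 * g (q.2 0)) ^ n])
    (continuousOn_mk ((c6.mul c1).mul c3).neg
      (((c4.mul c1).mul c3').add ((c2.mul c6).mul ((c5.sub (continuousOn_fst.mul c1)).pow n)))) ?_
  · refine this.congr fun x hx => ?_
    simp [powQuot_zero]
  · intro c x hx
    have e := sub_pow_eq n (x 1) (c * g (x 0))
    have e' := sub_pow_eq (n + 1) (x 1) (c * g (x 0))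
    ext i
    fin_cases i
    · simp [shear, ← sub_eq_add_neg]
      rw [e]
      ring
    · simp [shear, ← sub_eq_add_neg]
      rw [e']
      ring

/-- The `∂_z`-components of `apx_shear_monomial` for `g = G(z) / z` and of `-n` times
`apx_shear_horizontal` for `g = G` cancel, and so do the terms with `G'`; what is left is
`G(z) w ^ n ∂_w`. -/
lemma apx_vertical {G : ℂ → ℂ} (hG : DifferentiableOn ℂ G {0}ᶜ) (n : ℕ) :
    Apx (fun x => !₂[0, G (x 0) * x 1 ^ n]) := by
  have hg : DifferentiableOn ℂ (fun z => G z / z) {0}ᶜ :=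
    hG.div differentiableOn_id fun x hx => hx
  refine ((apx_shear_monomial hg n).add ((apx_shear_horizontal hG n).smul (-n))).congr
    fun x hx => ?_
  have hx : x 0 ≠ 0 := hx
  have hd : deriv (fun z => G z / z) (x 0) = (deriv G (x 0) * x 0 - G (x 0)) / x 0 ^ 2 := by
    rw [deriv_fun_div ((hG _ hx).differentiableAt (isOpen_compl_singleton.mem_nhds hx))
      differentiableAt_fun_id hx]
    simp
  ext i
  fin_cases i
  · simp
    field_simp
    ring
  · simp [hd]
    field_simp
    ring

/-- In `apx_shear_horizontal` for the exponent `n + 1` and `g = G(z) / z`, the `∂_w`-component can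
be subtracted by `apx_vertical`. -/
lemma apx_horizontal {G : ℂ → ℂ} (hG : DifferentiableOn ℂ G {0}ᶜ) (n : ℕ) :
    Apx (fun x => !₂[G (x 0) * x 1 ^ n, 0]) := by
  have hg : DifferentiableOn ℂ (fun z => G z / z) {0}ᶜ :=
    hG.div differentiableOn_id fun x hx => hx
  have hg' : DifferentiableOn ℂ (fun z => deriv (fun z => G z / z) z * z) {0}ᶜ :=
    (hg.deriv isOpen_compl_singleton).mul differentiableOn_id
  refine (((apx_shear_horizontal hg (n + 1)).smul (-1)).add (apx_vertical hg' (n + 1))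
    |>.smul ((n : ℂ) + 1)⁻¹).congr fun x hx => ?_
  have hx : x 0 ≠ 0 := hx
  have hn : (n : ℂ) + 1 ≠ 0 := Nat.cast_add_one_ne_zero n
  ext i
  fin_cases i
  · simp
    field_simp
  · simp

/-! ### Approximation of arbitrary holomorphic vector fields -/

/-- Integrals of `f (z, ·)` over a curve depend holomorphically on `z`, by differentiation under
the integral sign. -/
lemma differentiableOn_integral {f : E2 → ℂ} (hf : DifferentiableOn ℂ f OmegaStar)
    (hf1 : ContDiffOn ℝ 1 f OmegaStar) {κ γ : ℝ → ℂ} (hκ : Continuous κ) (hγ : Continuous γ)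
    (T : ℝ) : DifferentiableOn ℂ (fun z => ∫ s in (0 : ℝ)..T, κ s * f !₂[z, γ s]) {0}ᶜ := by
  intro z₀ hz₀
  refine DifferentiableAt.differentiableWithinAt ?_
  obtain ⟨r, hr, hball⟩ := Metric.nhds_basis_closedBall.mem_iff.1
    (isOpen_compl_singleton.mem_nhds hz₀)
  have hmem : ∀ z ∈ ({0}ᶜ : Set ℂ), ∀ w, (!₂[z, w] : E2) ∈ OmegaStar := fun z hz w => hz
  have hcurve : ContinuousOn (fun p : ℂ × ℝ => (!₂[p.1, γ p.2] : E2)) ({0}ᶜ ×ˢ univ) :=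
    continuousOn_mk (by fun_prop) (by fun_prop)
  have hmaps : MapsTo (fun p : ℂ × ℝ => (!₂[p.1, γ p.2] : E2)) ({0}ᶜ ×ˢ univ) OmegaStar :=
    fun p hp => hmem _ hp.1 _
  have hF : ContinuousOn (fun p : ℂ × ℝ => κ p.2 * f !₂[p.1, γ p.2]) ({0}ᶜ ×ˢ univ) :=
    ContinuousOn.mul (by fun_prop) (hf.continuousOn.comp hcurve hmaps)
  have hF' : ContinuousOn (fun p : ℂ × ℝ => κ p.2 * fderiv ℝ f !₂[p.1, γ p.2] !₂[1, 0])
      ({0}ᶜ ×ˢ univ) :=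
    ContinuousOn.mul (by fun_prop) (((hf1.continuousOn_fderiv_of_isOpen isOpen_omega
      le_rfl).comp hcurve hmaps).clm_apply continuousOn_const)
  have hslice : ∀ z ∈ ({0}ᶜ : Set ℂ), ∀ G : ℂ × ℝ → ℂ, ContinuousOn G ({0}ᶜ ×ˢ univ) →
      Continuous (fun s => G (z, s)) := fun z hz G hG =>
    hG.comp_continuous (by fun_prop) fun s => ⟨hz, mem_univ _⟩
  obtain ⟨M, hM⟩ := ((isCompact_closedBall z₀ r).prod
    (isCompact_uIcc (a := (0 : ℝ)) (b := T))).exists_bound_of_continuousOn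
    (hF'.mono (prod_mono hball (subset_univ _)))
  refine (intervalIntegral.hasDerivAt_integral_of_dominated_loc_of_deriv_le
    (F := fun z s => κ s * f !₂[z, γ s])
    (F' := fun z s => κ s * fderiv ℝ f !₂[z, γ s] !₂[1, 0]) (bound := fun _ => M)
    (Metric.closedBall_mem_nhds z₀ hr) ?_ ?_ ?_ ?_ ?_ ?_).2.differentiableAt
  · filter_upwards [isOpen_compl_singleton.mem_nhds hz₀] with z hz
    exact (hslice z hz _ hF).aestronglyMeasurable
  · exact (hslice z₀ hz₀ _ hF).intervalIntegrable _ _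
  · exact (hslice z₀ hz₀ _ hF').aestronglyMeasurable
  · exact Filter.Eventually.of_forall fun s hs z hz => hM (z, s) ⟨hz, uIoc_subset_uIcc hs⟩
  · exact intervalIntegrable_const
  · refine Filter.Eventually.of_forall fun s hs z hz => HasDerivAt.const_mul _ ?_
    have h1 := ((hf _ (hmem z (hball hz) (γ s))).differentiableAt
      (isOpen_omega.mem_nhds (hmem z (hball hz) (γ s)))).hasFDerivAt
    rw [(h1.restrictScalars ℝ).fderiv]
    exact h1.comp_hasDerivAt z (hasDerivAt_mk (hasDerivAt_id z) (hasDerivAt_const z (γ s)))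

/-- The Taylor coefficients of `f (z, ·)` at `0` are holomorphic in `z`. -/
lemma differentiableOn_cauchyCoeff {f : E2 → ℂ} (hf : DifferentiableOn ℂ f OmegaStar)
    (hf1 : ContDiffOn ℝ 1 f OmegaStar) {ρ : ℝ} (hρ : 0 < ρ) (n : ℕ) :
    DifferentiableOn ℂ (fun z => (cauchyPowerSeries (fun η => f !₂[z, η]) 0 ρ).coeff n)
      {0}ᶜ := by
  have hne : ∀ s, circleMap 0 ρ s ≠ 0 := fun s => circleMap_ne_center hρ.ne'
  have h := (differentiableOn_integral hf hf1 (γ := circleMap 0 ρ)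
    (κ := fun s => circleMap 0 ρ s * Complex.I * ((1 / circleMap 0 ρ s) ^ n *
      (circleMap 0 ρ s)⁻¹)) ?_ (continuous_circleMap 0 ρ) (2 * Real.pi)).const_mul
    (2 * Real.pi * Complex.I)⁻¹
  · refine h.congr fun z hz => ?_
    rw [FormalMultilinearSeries.coeff]
    change (cauchyPowerSeries (fun η => f !₂[z, η]) 0 ρ n fun _ => 1) = _
    rw [cauchyPowerSeries_apply]
    simp [circleIntegral, mul_assoc]
  · have := continuous_circleMap 0 ρ
    fun_prop (disch := exact hne)

/-- Taylor expansion in the second variable, uniformly on compact sets. -/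
lemma taylor_approx {f : E2 → ℂ} (hf : DifferentiableOn ℂ f OmegaStar)
    (hf1 : ContDiffOn ℝ 1 f OmegaStar) {K : Set E2} (hK : IsCompact K) (hKΩ : K ⊆ OmegaStar)
    {ε : ℝ} (hε : 0 < ε) : ∃ (N : ℕ) (c : ℕ → ℂ → ℂ), (∀ n, DifferentiableOn ℂ (c n) {0}ᶜ) ∧
      ∀ x ∈ K, ‖(∑ n ∈ Finset.range N, c n (x 0) * x 1 ^ n) - f x‖ ≤ ε := by
  obtain ⟨R, hR0, hR⟩ : ∃ R : ℝ, 0 < R ∧ ∀ x ∈ K, ‖x 1‖ ≤ R := by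
    obtain ⟨R, hR⟩ := hK.exists_bound_of_continuousOn (f := fun x : E2 => x 1) (by fun_prop)
    exact ⟨max R 1, by positivity, fun x hx => (hR x hx).trans (le_max_left _ _)⟩
  have hcont : ContinuousOn (fun p : E2 × ℝ => f !₂[p.1 0, circleMap 0 (2 * R) p.2])
      (OmegaStar ×ˢ univ) := by
    refine hf.continuousOn.comp (continuousOn_mk (by fun_prop) ?_) fun p hp => hp.1
    exact ((continuous_circleMap 0 (2 * R)).comp continuous_snd).continuousOn
  -- the Cauchy estimates on the circle of radius `2 R` give the geometric ratio `1 / 2` on `K`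
  obtain ⟨M, hM⟩ := (hK.prod (isCompact_uIcc (a := (0 : ℝ))
    (b := 2 * Real.pi))).exists_bound_of_continuousOn (hcont.mono (prod_mono hKΩ (subset_univ _)))
  have hcoef : ∀ x ∈ K, ∀ n, ‖(cauchyPowerSeries (fun η => f !₂[x 0, η]) 0 (2 * R)).coeff n‖ ≤
      (|M| + 1) * (2 * R)⁻¹ ^ n := by
    intro x hx n
    rw [← FormalMultilinearSeries.norm_apply_eq_norm_coef]
    refine (norm_cauchyPowerSeries_le _ _ _ _).trans ?_
    rw [abs_of_pos (by positivity : (0 : ℝ) < 2 * R)]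
    gcongr
    have h1 : ‖∫ s in (0 : ℝ)..2 * Real.pi, ‖f !₂[x 0, circleMap 0 (2 * R) s]‖‖ ≤
        (|M| + 1) * |2 * Real.pi - 0| := by
      refine intervalIntegral.norm_integral_le_of_norm_le_const fun s hs => ?_
      rw [norm_norm]
      have := hM (x, s) ⟨hx, uIoc_subset_uIcc hs⟩
      have h2 := le_abs_self M
      simp only at this
      linarith
    have h2 := (le_abs_self _).trans h1
    rw [sub_zero, abs_of_pos Real.two_pi_pos] at h2
    rw [inv_mul_le_iff₀ Real.two_pi_pos, mul_comm (2 * Real.pi)]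
    exact h2
  obtain ⟨N, hN⟩ := exists_pow_lt_of_lt_one (y := (1 / 2 : ℝ)) (x := ε / (2 * (|M| + 1)))
    (by positivity) (by norm_num)
  refine ⟨N, fun n z => (cauchyPowerSeries (fun η => f !₂[z, η]) 0 (2 * R)).coeff n,
    fun n => differentiableOn_cauchyCoeff hf hf1 (by positivity) n, fun x hx => ?_⟩
  have hx0 : x ∈ OmegaStar := hKΩ hx
  have hd : DifferentiableOn ℂ (fun η => f !₂[x 0, η]) (Metric.closedBall 0 (2 * R)) := by
    refine hf.comp (f := fun η => (!₂[x 0, η] : E2)) (fun η _ => ?_) (fun η _ => hx0)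
    exact (hasDerivAt_mk (hasDerivAt_const η (x 0))
      (hasDerivAt_id η)).differentiableAt.differentiableWithinAt
  lift R to NNReal using hR0.le
  have hR1 : 0 < R := by exact_mod_cast hR0
  have hps := hd.hasFPowerSeriesOnBall (R := 2 * R) (by positivity)
  have hsum := hps.hasSum (y := x 1) (by
    have := hR x hx
    rw [Metric.mem_eball, edist_zero_right, enorm_eq_nnnorm]
    have h2 : ‖x 1‖₊ ≤ R := by exact_mod_cast this
    have h3 : R < 2 * R := by
      rw [two_mul]
      exact lt_add_of_pos_left R hR1
    exact_mod_cast h2.trans_lt h3)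
  simp only [FormalMultilinearSeries.apply_eq_pow_smul_coeff, zero_add, smul_eq_mul,
    NNReal.coe_mul, NNReal.coe_ofNat] at hsum
  have hxe : (!₂[x 0, x 1] : E2) = x := by
    ext i
    fin_cases i <;> simp
  rw [hxe] at hsum
  have hb : ∀ n, ‖x 1 ^ n * (cauchyPowerSeries (fun η => f !₂[x 0, η]) 0 (2 * R)).coeff n‖ ≤
      (|M| + 1) * (1 / 2) ^ n := by
    intro n
    rw [norm_mul, norm_pow]
    calc _ ≤ (R : ℝ) ^ n * ((|M| + 1) * (2 * R : ℝ)⁻¹ ^ n) := by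
          gcongr
          · exact hR x hx
          · exact hcoef x hx n
      _ = (|M| + 1) * (R * (2 * R : ℝ)⁻¹) ^ n := by rw [mul_pow]; ring
      _ = _ := by
        congr 2
        field_simp
  have := norm_sub_le_of_geometric_bound_of_hasSum (by norm_num) hb hsum N
  simp only [mul_comm _ (x 1 ^ _)]
  refine this.trans ?_
  rw [lt_div_iff₀ (by positivity)] at hN
  refine le_trans (le_of_eq ?_) hN.le
  ring

/-- Every holomorphic vector field on `ℂ* × ℂ` is approximable. The hypothesis `hV1`, automatic for
holomorphic maps, serves to differentiate Cauchy integrals under the integral sign. -/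
lemma apx_of_differentiableOn {V : E2 → E2} (hV : DifferentiableOn ℂ V OmegaStar)
    (hV1 : ContDiffOn ℝ 1 V OmegaStar) : Apx V := by
  have h0 : ∀ i : Fin 2, DifferentiableOn ℂ (fun x => V x i) OmegaStar :=
    differentiableOn_euclidean.1 hV
  have h1 : ∀ i : Fin 2, ContDiffOn ℝ 1 (fun x => V x i) OmegaStar := fun i =>
    ((EuclideanSpace.proj (𝕜 := ℂ) i).restrictScalars ℝ).contDiff.comp_contDiffOn hV1
  have hA : Apx (fun x => !₂[V x 0, 0]) := by
    refine Apx.of_forall fun K hK hKΩ ε hε => ?_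
    obtain ⟨N, c, hc, h⟩ := taylor_approx (h0 0) (h1 0) hK hKΩ hε
    refine ⟨_, Apx.sum (fun n => apx_horizontal (hc n) n) N, fun x hx => ?_⟩
    refine le_trans (le_of_eq ?_) (h x hx)
    simp [EuclideanSpace.norm_eq]
  have hB : Apx (fun x => !₂[0, V x 1]) := by
    refine Apx.of_forall fun K hK hKΩ ε hε => ?_
    obtain ⟨N, c, hc, h⟩ := taylor_approx (h0 1) (h1 1) hK hKΩ hε
    refine ⟨_, Apx.sum (fun n => apx_vertical (hc n) n) N, fun x hx => ?_⟩
    refine le_trans (le_of_eq ?_) (h x hx)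
    simp [EuclideanSpace.norm_eq]
  refine (hA.add hB).congr fun x hx => ?_
  ext i
  fin_cases i <;> simp

/-! ### The pulled back velocity of an isotopy -/

/-- The domain `[0, 1] × (ℂ* × ℂ)` of an isotopy. It is not open, but it is a set of unique
differentiability, so that `fderivWithin` is meaningful up to the end points. -/
def Cyl : Set (ℝ × E2) := Icc (0 : ℝ) 1 ×ˢ OmegaStar

lemma uniqueDiffOn_cyl : UniqueDiffOn ℝ Cyl :=
  (uniqueDiffOn_Icc zero_lt_one).prod isOpen_omega.uniqueDiffOn

/-- A real differentiable map with complex homogeneous derivative is complex differentiable. -/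
lemma differentiableAt_complex {f : E2 → E2} {L : E2 →L[ℝ] E2} {x : E2} (h : HasFDerivAt f L x)
    (hL : ∀ (c : ℂ) v, L (c • v) = c • L v) : DifferentiableAt ℂ f x := by
  rw [differentiableAt_iff_restrictScalars ℝ h.differentiableAt, h.fderiv]
  exact ⟨⟨⟨⟨L, L.map_add⟩, hL⟩, L.continuous⟩, by ext; rfl⟩

lemma hasFDerivWithinAt_theta {θ : ℝ × E2 → E2} (hθ : ContDiffOn ℝ 2 θ Cyl)
    {p : ℝ × E2} (hp : p ∈ Cyl) :
    HasFDerivWithinAt θ (fderivWithin ℝ θ Cyl p) Cyl p :=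
  (hθ.differentiableOn two_ne_zero p hp).hasFDerivWithinAt

lemma contDiffOn_fderiv_theta {θ : ℝ × E2 → E2} (hθ : ContDiffOn ℝ 2 θ Cyl) :
    ContDiffOn ℝ 1 (fderivWithin ℝ θ Cyl) Cyl :=
  hθ.fderivWithin uniqueDiffOn_cyl (by norm_num)

lemma hasFDerivAt_slice {F : Type*} [NormedAddCommGroup F] [NormedSpace ℝ F] {f : ℝ × E2 → F}
    {f' : ℝ × E2 →L[ℝ] F} {t : ℝ} (ht : t ∈ Icc (0 : ℝ) 1) {x : E2} (hx : x ∈ OmegaStar)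
    (h : HasFDerivWithinAt f f' Cyl (t, x)) :
    HasFDerivAt (fun y => f (t, y)) (f'.comp (ContinuousLinearMap.inr ℝ ℝ E2)) x :=
  (h.comp x (hasFDerivAt_prodMk_right t x).hasFDerivWithinAt
    (s := OmegaStar) (fun _ hy => ⟨ht, hy⟩)).hasFDerivAt (isOpen_omega.mem_nhds hx)

/-- In the space directions the derivative of the isotopy is complex linear. -/
lemma fderiv_theta_smul {θ : ℝ × E2 → E2} (hθ : ContDiffOn ℝ 2 θ Cyl)
    (hA : ∀ t ∈ Icc (0 : ℝ) 1, IsAutOn OmegaStar (fun z => θ (t, z)))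
    {t : ℝ} (ht : t ∈ Icc (0 : ℝ) 1) {x : E2} (hx : x ∈ OmegaStar) (c : ℂ) (v : E2) :
    fderivWithin ℝ θ Cyl (t, x) (0, c • v) = c • fderivWithin ℝ θ Cyl (t, x) (0, v) := by
  have h1 := hasFDerivAt_slice ht hx (hasFDerivWithinAt_theta hθ ⟨ht, hx⟩)
  have h2 := (((hA t ht).1 x hx).differentiableAt (isOpen_omega.mem_nhds hx)).hasFDerivAt
  have h3 := h1.unique (h2.restrictScalars ℝ)
  have h4 : ∀ v, fderivWithin ℝ θ Cyl (t, x) (0, v) = fderiv ℂ (fun z => θ (t, z)) x v :=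
    fun v => congrArg (fun L : E2 →L[ℝ] E2 => L v) h3
  rw [h4, h4, map_smul]

/-- The derivatives of the isotopy are holomorphic in the space variable: by the symmetry of the
second derivative, their derivative is that of a family of complex linear maps. -/
lemma hasFDerivAt_fderiv_apply {θ : ℝ × E2 → E2} (hθ : ContDiffOn ℝ 2 θ Cyl)
    {t : ℝ} (ht : t ∈ Icc (0 : ℝ) 1) {x : E2} (hx : x ∈ OmegaStar)
    (hA : ∀ t ∈ Icc (0 : ℝ) 1, IsAutOn OmegaStar (fun z => θ (t, z))) (u : ℝ × E2) :
    ∃ L : E2 →L[ℝ] E2, HasFDerivAt (fun y => fderivWithin ℝ θ Cyl (t, y) u) L x ∧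
      ∀ (c : ℂ) v, L (c • v) = c • L v := by
  have hp : (t, x) ∈ Cyl := ⟨ht, hx⟩
  set D' := fderivWithin ℝ (fderivWithin ℝ θ Cyl) Cyl (t, x) with hD'
  have h1 : HasFDerivWithinAt (fderivWithin ℝ θ Cyl) D' Cyl (t, x) :=
    ((contDiffOn_fderiv_theta hθ).differentiableOn one_ne_zero _ hp).hasFDerivWithinAt
  have happ : ∀ w : ℝ × E2, HasFDerivWithinAt (fun p => fderivWithin ℝ θ Cyl p w)
      (D'.flip w) Cyl (t, x) := fun w => by
    have := h1.clm_apply (hasFDerivWithinAt_const w (t, x) Cyl)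
    simpa using this
  have hcl : (t, x) ∈ closure (interior Cyl) := by
    rw [Cyl, interior_prod_eq, interior_Icc, isOpen_omega.interior_eq, closure_prod_eq,
      closure_Ioo zero_ne_one]
    exact ⟨ht, subset_closure hx⟩
  have hsymm : IsSymmSndFDerivWithinAt ℝ θ Cyl (t, x) :=
    (hθ _ hp).isSymmSndFDerivWithinAt (by simp) uniqueDiffOn_cyl hcl hp
  refine ⟨_, hasFDerivAt_slice ht hx (happ u), fun c v => ?_⟩
  have h2 : HasFDerivWithinAt (fun p => fderivWithin ℝ θ Cyl p (0, c • v))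
      (c • D'.flip (0, v)) Cyl (t, x) :=
    ((happ (0, v)).const_smul c).congr (fun p hq => fderiv_theta_smul hθ hA hq.1 hq.2 c v)
      (fderiv_theta_smul hθ hA ht hx c v)
  have h3 := (uniqueDiffOn_cyl _ hp).eq (happ (0, c • v)) h2
  have h4 := congrArg (fun L : ℝ × E2 →L[ℝ] E2 => L u) h3
  simp only [ContinuousLinearMap.flip_apply, smul_apply] at h4
  change D' (0, c • v) u = c • D' (0, v) u
  rw [hsymm (0, c • v) u, hsymm (0, v) u]
  exact h4

/-- The spatial derivative of the isotopy is invertible. -/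
lemma exists_equiv {θ : ℝ × E2 → E2} (hθ : ContDiffOn ℝ 2 θ Cyl)
    {t : ℝ} (ht : t ∈ Icc (0 : ℝ) 1) {x : E2} (hx : x ∈ OmegaStar)
    (hA : ∀ t ∈ Icc (0 : ℝ) 1, IsAutOn OmegaStar (fun z => θ (t, z))) :
    ∃ e : E2 ≃L[ℝ] E2, (e : E2 →L[ℝ] E2) =
      (fderivWithin ℝ θ Cyl (t, x)).comp (ContinuousLinearMap.inr ℝ ℝ E2) := by
  have h1 := hasFDerivAt_slice ht hx (hasFDerivWithinAt_theta hθ ⟨ht, hx⟩)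
  obtain ⟨-, hm, χ, hχ, hχm, h2, h3⟩ := hA t ht
  have hy : θ (t, x) ∈ OmegaStar := hm hx
  have h4 := ((hχ _ hy).differentiableAt (isOpen_omega.mem_nhds hy)).hasFDerivAt.restrictScalars ℝ
  set B := (fderiv ℂ χ (θ (t, x))).restrictScalars ℝ
  set A := (fderivWithin ℝ θ Cyl (t, x)).comp (ContinuousLinearMap.inr ℝ ℝ E2)
  have h5 : B.comp A = ContinuousLinearMap.id ℝ E2 := by
    refine (h4.comp x h1).unique ((hasFDerivAt_id x).congr_of_eventuallyEq ?_)
    filter_upwards [isOpen_omega.mem_nhds hx] with y hy using h2 y hy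
  have h6 : A.comp B = ContinuousLinearMap.id ℝ E2 := by
    have h1' : HasFDerivAt (fun y => θ (t, y)) A (χ (θ (t, x))) := by rwa [h2 x hx]
    refine (h1'.comp _ h4).unique ((hasFDerivAt_id _).congr_of_eventuallyEq ?_)
    filter_upwards [isOpen_omega.mem_nhds hy] with y hy using h3 y hy
  refine ⟨ContinuousLinearEquiv.equivOfInverse A B (fun v => ?_) (fun v => ?_), ?_⟩
  · exact congrArg (fun L : E2 →L[ℝ] E2 => L v) h5
  · exact congrArg (fun L : E2 →L[ℝ] E2 => L v) h6
  · ext; rfl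

/-- The velocity of the isotopy, pulled back by its spatial derivative, is a holomorphic vector
field, hence approximable. -/
lemma exists_field {θ : ℝ × E2 → E2} (hθ : ContDiffOn ℝ 2 θ Cyl)
    {t : ℝ} (ht : t ∈ Icc (0 : ℝ) 1)
    (hA : ∀ t ∈ Icc (0 : ℝ) 1, IsAutOn OmegaStar (fun z => θ (t, z))) :
    ∃ Z : E2 → E2, Apx Z ∧ ∀ x ∈ OmegaStar,
      fderivWithin ℝ θ Cyl (t, x) (0, Z x) = fderivWithin ℝ θ Cyl (t, x) (1, 0) := by
  set A : E2 → E2 →L[ℝ] E2 := fun x =>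
    (fderivWithin ℝ θ Cyl (t, x)).comp (ContinuousLinearMap.inr ℝ ℝ E2) with hAdef
  set b : E2 → E2 := fun x => fderivWithin ℝ θ Cyl (t, x) (1, 0) with hb
  have hD1 : ContDiffOn ℝ 1 (fun y => fderivWithin ℝ θ Cyl (t, y)) OmegaStar :=
    (contDiffOn_fderiv_theta hθ).comp (f := fun y => (t, y)) (by fun_prop) fun y hy => ⟨ht, hy⟩
  have hA1 : ContDiffOn ℝ 1 A OmegaStar := hD1.clm_comp contDiffOn_const
  have hb1 : ContDiffOn ℝ 1 b OmegaStar := hD1.clm_apply contDiffOn_const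
  have hZ1 : ContDiffOn ℝ 1 (fun x => (A x).inverse (b x)) OmegaStar := by
    intro x hx
    obtain ⟨e, he⟩ := exists_equiv hθ ht hx hA
    have h1 : ContDiffAt ℝ 1 ContinuousLinearMap.inverse (A x) := by
      rw [hAdef]
      simp only
      rw [← he]
      exact contDiffAt_map_inverse e
    exact (h1.comp_contDiffWithinAt x (hA1 x hx)).clm_apply (hb1 x hx)
  have hZ : ∀ x ∈ OmegaStar, A x ((A x).inverse (b x)) = b x := by
    intro x hx
    obtain ⟨e, he⟩ := exists_equiv hθ ht hx hA
    have : A x = e := he.symm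
    rw [this]
    simp
  refine ⟨fun x => (A x).inverse (b x), apx_of_differentiableOn (fun x hx => ?_) hZ1, hZ⟩
  refine DifferentiableAt.differentiableWithinAt ?_
  obtain ⟨e, he⟩ := exists_equiv hθ ht hx hA
  have hAe : A x = e := he.symm
  have hnhds := isOpen_omega.mem_nhds hx
  have h1 := ((hZ1.contDiffAt hnhds).differentiableAt one_ne_zero).hasFDerivAt
  have h2 := ((hA1.contDiffAt hnhds).differentiableAt one_ne_zero).hasFDerivAt
  obtain ⟨L, hL, hLc⟩ := hasFDerivAt_fderiv_apply hθ ht hx hA (1, 0)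
  obtain ⟨M, hM, hMc⟩ := hasFDerivAt_fderiv_apply hθ ht hx hA (0, (A x).inverse (b x))
  set Z' := fderiv ℝ (fun x => (A x).inverse (b x)) x
  refine differentiableAt_complex h1 fun c v => ?_
  -- differentiate the identity `A Z = b`
  have h3 : HasFDerivAt (fun y => A y ((A y).inverse (b y))) L x := by
    refine hL.congr_of_eventuallyEq ?_
    filter_upwards [hnhds] with y hy using hZ y hy
  have h4 := (h2.clm_apply h1).unique h3
  have h5 : (fderiv ℝ A x).flip ((A x).inverse (b x)) = M := by
    have := h2.clm_apply (hasFDerivAt_const ((A x).inverse (b x)) x)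
    simp only [ContinuousLinearMap.comp_zero, zero_add] at this
    exact this.unique hM
  have h6 : ∀ v, A x (Z' v) + M v = L v := fun v => by
    rw [← h4, ← h5]
    rfl
  have h7 : ∀ w, A x (c • w) = c • A x w := fun w => fderiv_theta_smul hθ hA ht hx c w
  have h8 : A x (Z' (c • v)) = A x (c • Z' v) := by
    rw [h7, eq_sub_of_add_eq (h6 v), eq_sub_of_add_eq (h6 (c • v)), hLc, hMc, smul_sub]
  rw [hAe] at h8
  exact e.injective h8

/-! ### Properness of an isotopy -/

/-- The inverses of the automorphisms `θ (t, ·)` depend continuously on `t`: the inverse function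
theorem holds locally uniformly in `t`. -/
lemma continuousOn_inverse {θ : ℝ × E2 → E2} (hθ : ContDiffOn ℝ 2 θ Cyl)
    (hA : ∀ t ∈ Icc (0 : ℝ) 1, IsAutOn OmegaStar (fun z => θ (t, z))) {η : ℝ × E2 → E2}
    (hm : ∀ t ∈ Icc (0 : ℝ) 1, ∀ y ∈ OmegaStar, η (t, y) ∈ OmegaStar)
    (hl : ∀ t ∈ Icc (0 : ℝ) 1, ∀ y ∈ OmegaStar, η (t, θ (t, y)) = y)
    (hr : ∀ t ∈ Icc (0 : ℝ) 1, ∀ y ∈ OmegaStar, θ (t, η (t, y)) = y) :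
    ContinuousOn η Cyl := by
  rintro ⟨t₀, y₀⟩ ⟨ht₀, hy₀⟩
  set x₀ := η (t₀, y₀) with hx₀
  have hx₀' : x₀ ∈ OmegaStar := hm t₀ ht₀ y₀ hy₀
  obtain ⟨e, he⟩ := exists_equiv hθ ht₀ hx₀' hA
  set A : ℝ × E2 → E2 →L[ℝ] E2 := fun p =>
    (fderivWithin ℝ θ Cyl p).comp (ContinuousLinearMap.inr ℝ ℝ E2) with hAdef
  have hAc : ContinuousOn A Cyl :=
    ((contDiffOn_fderiv_theta hθ).clm_comp contDiffOn_const).continuousOn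
  have hN : 0 < ‖(e.symm : E2 →L[ℝ] E2)‖₊ := e.nnnorm_symm_pos
  set N := ‖(e.symm : E2 →L[ℝ] E2)‖₊ with hNdef
  have hc : 0 < (N⁻¹ / 2 : NNReal) := by positivity
  -- near `(t₀, x₀)` the spatial derivative stays close to `e`
  obtain ⟨r₁, hr₁, h1⟩ := Metric.continuousWithinAt_iff.1 (hAc (t₀, x₀) ⟨ht₀, hx₀'⟩)
    (N⁻¹ / 2 : NNReal) hc
  obtain ⟨r₂, hr₂, h2⟩ := Metric.isOpen_iff.1 isOpen_omega x₀ hx₀'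
  rw [Metric.continuousWithinAt_iff]
  intro ε hε
  set r := min (min (r₁ / 2) (r₂ / 2)) (ε / 2) with hrdef
  have hr0 : 0 < r := by positivity
  have hrr₁ : r < r₁ := ((min_le_left _ _).trans (min_le_left _ _)).trans_lt (by linarith)
  have hrr₂ : r < r₂ := ((min_le_left _ _).trans (min_le_right _ _)).trans_lt (by linarith)
  have hrε : r < ε := (min_le_right _ _).trans_lt (by linarith)
  have hsub : Metric.closedBall x₀ r ⊆ OmegaStar :=
    (Metric.closedBall_subset_ball hrr₂).trans h2
  have hρ : 0 < ((N : ℝ)⁻¹ - (N⁻¹ / 2 : NNReal)) * r := by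
    have : (0 : ℝ) < (N : ℝ)⁻¹ := by positivity
    push_cast
    refine mul_pos (by linarith) hr0
  set ρ := ((N : ℝ)⁻¹ - (N⁻¹ / 2 : NNReal)) * r with hρdef
  have hcont : ContinuousWithinAt (fun t => θ (t, x₀)) (Icc 0 1) t₀ :=
    (hθ.continuousOn (t₀, x₀) ⟨ht₀, hx₀'⟩).comp (f := fun t => (t, x₀))
      (by fun_prop) (fun t ht => ⟨ht, hx₀'⟩)
  obtain ⟨r₃, hr₃, h3⟩ := Metric.continuousWithinAt_iff.1 hcont (ρ / 2) (by positivity)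
  refine ⟨min (min r₁ r₃) (ρ / 2), by positivity, ?_⟩
  rintro ⟨t, y⟩ ⟨ht, hy⟩ hd
  simp only at ht hy
  rw [Prod.dist_eq, max_lt_iff] at hd
  simp only at hd
  have ht1 : dist t t₀ < r₁ := hd.1.trans_le ((min_le_left _ _).trans (min_le_left _ _))
  have ht3 : dist t t₀ < r₃ := hd.1.trans_le ((min_le_left _ _).trans (min_le_right _ _))
  have hyy : dist y y₀ < ρ / 2 := hd.2.trans_le (min_le_right _ _)
  have happrox : ApproximatesLinearOn (fun x => θ (t, x)) (e : E2 →L[ℝ] E2)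
      (Metric.closedBall x₀ r) (N⁻¹ / 2) := by
    have hd : ∀ w ∈ Metric.closedBall x₀ r, HasFDerivWithinAt (fun x => θ (t, x)) (A (t, w))
        (Metric.closedBall x₀ r) w := fun w hw =>
      (hasFDerivAt_slice ht (hsub hw) (hasFDerivWithinAt_theta hθ ⟨ht, hsub hw⟩)).hasFDerivWithinAt
    have hb : ∀ w ∈ Metric.closedBall x₀ r,
        ‖A (t, w) - (e : E2 →L[ℝ] E2)‖ ≤ (N⁻¹ / 2 : NNReal) := fun w hw => by
      have := h1 (x := (t, w)) ⟨ht, hsub hw⟩ (by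
        rw [Prod.dist_eq]
        exact max_lt ht1 (lt_of_le_of_lt hw hrr₁))
      rw [dist_eq_norm] at this
      rw [he]
      exact this.le
    intro x hx z hz
    exact (convex_closedBall x₀ r).norm_image_sub_le_of_norm_hasFDerivWithin_le' hd hb hz hx
  have hsurj := happrox.surjOn_closedBall_of_nonlinearRightInverse e.toNonlinearRightInverse
    hr0.le subset_rfl
  have hy' : y ∈ Metric.closedBall (θ (t, x₀)) ρ := by
    have h4 := h3 ht ht3
    rw [hx₀, hr t₀ ht₀ y₀ hy₀, ← hx₀] at h4
    rw [Metric.mem_closedBall]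
    have := dist_triangle_right y (θ (t, x₀)) y₀
    linarith
  obtain ⟨x, hx, hxy⟩ := hsurj hy'
  simp only at hxy
  rw [← hxy, hl t ht x (hsub hx)]
  exact lt_of_le_of_lt hx hrε

/-- The isotopy is proper over `[0, 1]`. -/
lemma exists_compact {θ : ℝ × E2 → E2} (hθ : ContDiffOn ℝ 2 θ Cyl)
    (hA : ∀ t ∈ Icc (0 : ℝ) 1, IsAutOn OmegaStar (fun z => θ (t, z))) {C : Set E2}
    (hC : IsCompact C) (hCΩ : C ⊆ OmegaStar) :
    ∃ L, IsCompact L ∧ L ⊆ OmegaStar ∧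
      ∀ t ∈ Icc (0 : ℝ) 1, ∀ y ∈ OmegaStar, θ (t, y) ∈ C → y ∈ L := by
  have : ∀ t : ℝ, ∃ χ : E2 → E2, t ∈ Icc (0 : ℝ) 1 → MapsTo χ OmegaStar OmegaStar ∧
      (∀ z ∈ OmegaStar, χ (θ (t, z)) = z) ∧ ∀ z ∈ OmegaStar, θ (t, χ z) = z := fun t => by
    by_cases ht : t ∈ Icc (0 : ℝ) 1
    · obtain ⟨-, -, χ, -, h⟩ := hA t ht
      exact ⟨χ, fun _ => h⟩
    · exact ⟨id, fun h => absurd h ht⟩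
  choose χ hχ using this
  have hcont : ContinuousOn (fun p : ℝ × E2 => χ p.1 p.2) Cyl :=
    continuousOn_inverse hθ hA (fun t ht y hy => (hχ t ht).1 hy)
      (fun t ht => (hχ t ht).2.1) (fun t ht => (hχ t ht).2.2)
  refine ⟨(fun p : ℝ × E2 => χ p.1 p.2) '' (Icc 0 1 ×ˢ C),
    (isCompact_Icc.prod hC).image_of_continuousOn (hcont.mono (prod_mono subset_rfl hCΩ)), ?_, ?_⟩
  · rintro _ ⟨⟨t, y⟩, ⟨ht, hy⟩, rfl⟩
    exact (hχ t ht).1 (hCΩ hy)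
  · intro t ht y hy hyC
    exact ⟨(t, θ (t, y)), ⟨ht, hyC⟩, (hχ t ht).2.1 y hy⟩

/-! ### Following an isotopy by a family -/

/-- Near a time `t₀`, the isotopy is followed backwards by a family tangent to an approximation of
the pulled back velocity, with an error that is small compared with the elapsed time. -/
lemma local_step {θ : ℝ × E2 → E2} (hθ : ContDiffOn ℝ 2 θ Cyl)
    (hA : ∀ t ∈ Icc (0 : ℝ) 1, IsAutOn OmegaStar (fun z => θ (t, z))) {t₀ : ℝ}
    (ht₀ : t₀ ∈ Icc (0 : ℝ) 1) {L : Set E2} (hL : IsCompact L) (hLΩ : L ⊆ OmegaStar) {δ : ℝ}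
    (hδ : 0 < δ) :
    ∃ η > 0, ∃ F, IsFam F ∧ ∀ t ∈ Icc (0 : ℝ) 1, ∀ t' ∈ Icc (0 : ℝ) 1, |t - t₀| < η →
      |t' - t₀| < η → t' ≤ t → ∀ y ∈ L,
        ‖θ (t', F (((t - t' : ℝ) : ℂ), y)) - θ (t, y)‖ ≤ δ * (t - t') := by
  set D := fderivWithin ℝ θ Cyl with hD
  have hDc : ContinuousOn D Cyl := (contDiffOn_fderiv_theta hθ).continuousOn
  obtain ⟨Z, hZ, hZD⟩ := exists_field hθ ht₀ hA
  obtain ⟨B, hB⟩ := hL.exists_bound_of_continuousOn (f := fun y => D (t₀, y))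
    (hDc.comp (f := fun y => (t₀, y)) (by fun_prop) fun y hy => ⟨ht₀, hLΩ hy⟩)
  obtain ⟨W, ⟨F, hF, hFW⟩, hWZ⟩ := hZ L hL hLΩ (δ / (|B| + 1)) (by positivity)
  set G : E2 → ℝ → E2 := fun y s => fderiv ℂ F ((s : ℂ), y) (1, 0) with hG
  -- the derivative in `s` of `θ (τ - s, F (s, y))`
  set E : (ℝ × ℝ) × E2 → E2 := fun q => D (q.1.1, F ((q.1.2 : ℂ), q.2)) (-1, G q.2 q.1.2) with hE
  set S : Set ((ℝ × ℝ) × E2) := (Icc (0 : ℝ) 1 ×ˢ univ) ×ˢ OmegaStar with hS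
  have hcast : ContinuousOn (fun q : (ℝ × ℝ) × E2 => ((q.1.2 : ℂ), q.2)) S := by fun_prop
  have hmaps : MapsTo (fun q : (ℝ × ℝ) × E2 => ((q.1.2 : ℂ), q.2)) S
      ((univ : Set ℂ) ×ˢ OmegaStar) := fun q hq => ⟨mem_univ _, hq.2⟩
  have hFc : ContinuousOn (fun q : (ℝ × ℝ) × E2 => F ((q.1.2 : ℂ), q.2)) S :=
    hF.1.continuousOn.comp hcast hmaps
  have hGc : ContinuousOn (fun q : (ℝ × ℝ) × E2 => G q.2 q.1.2) S :=
    ((hF.1.continuousOn_fderiv_of_isOpen isOpen_prod le_rfl).comp hcast hmaps).clm_apply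
      continuousOn_const
  have hEc : ContinuousOn E S := by
    refine (hDc.comp (ContinuousOn.prodMk (by fun_prop) hFc) fun q hq =>
      ⟨hq.1.1, hF.mem _ hq.2⟩).clm_apply (continuousOn_const.prodMk hGc)
  have hE0 : ∀ y ∈ L, ‖E ((t₀, 0), y)‖ < δ := by
    intro y hy
    have hyΩ := hLΩ hy
    have h1 : E ((t₀, 0), y) = D (t₀, y) (0, W y - Z y) := by
      have h2 : G y 0 = W y := (hF.hasDerivAt 0 hyΩ).unique (by simpa using hFW y hyΩ)
      have h3 : F (((0 : ℝ) : ℂ), y) = y := by simpa using hF.2.2 y hyΩ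
      have h4 : ((-1 : ℝ), W y) = (0, W y) - (1, 0) := by simp
      have h5 : ((0 : ℝ), W y - Z y) = (0, W y) - (0, Z y) := by simp
      simp only [hE, h2, h3]
      rw [h4, h5, map_sub, map_sub, hZD y hyΩ]
    rw [h1]
    have h6 : ‖((0 : ℝ), W y - Z y)‖ = ‖W y - Z y‖ := by simp [Prod.norm_def]
    calc ‖D (t₀, y) (0, W y - Z y)‖ ≤ ‖D (t₀, y)‖ * ‖W y - Z y‖ := by
          rw [← h6]; exact ContinuousLinearMap.le_opNorm _ _
      _ ≤ |B| * (δ / (|B| + 1)) := by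
          gcongr
          · exact (hB y hy).trans (le_abs_self B)
          · exact hWZ y hy
      _ < δ := by
          rw [mul_div_assoc', div_lt_iff₀ (by positivity)]
          nlinarith
  have hev : ∀ᶠ q : ℝ × ℝ in nhds (t₀, 0), ∀ y ∈ L, (q, y) ∈ S → ‖E (q, y)‖ < δ := by
    refine hL.eventually_forall_of_forall_eventually
      (P := fun q y => (q, y) ∈ S → ‖E (q, y)‖ < δ) fun y hy => ?_
    have := (hEc ((t₀, 0), y) ⟨⟨ht₀, mem_univ _⟩, hLΩ hy⟩).norm.eventually_lt_const (hE0 y hy)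
    exact eventually_nhdsWithin_iff.1 this
  obtain ⟨r, hr, hrE⟩ := Metric.eventually_nhds_iff.1 hev
  refine ⟨r / 2, by positivity, F, hF, fun t ht t' ht' h1 h2 htt y hy => ?_⟩
  have hyΩ := hLΩ hy
  rw [abs_lt] at h1 h2
  have hmem : ∀ s ∈ Icc (0 : ℝ) (t - t'), t - s ∈ Icc (0 : ℝ) 1 := fun s hs =>
    ⟨by linarith [hs.2, ht'.1], by linarith [hs.1, ht.2]⟩
  have hder : ∀ s ∈ Icc (0 : ℝ) (t - t'), HasDerivWithinAt (fun s : ℝ => θ (t - s, F ((s : ℂ), y)))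
      (E ((t - s, s), y)) (Icc 0 (t - t')) s := by
    intro s hs
    have h3 : HasDerivAt (fun s : ℝ => F ((s : ℂ), y)) (G y s) s := by
      simpa [Function.comp_def] using
        (hF.hasDerivAt (s : ℂ) hyΩ).scomp s Complex.ofRealCLM.hasDerivAt
    have h4 : HasDerivAt (fun s : ℝ => t - s) (-1) s := by
      simpa using (hasDerivAt_id s).const_sub t
    exact (hasFDerivWithinAt_theta hθ (p := (t - s, F ((s : ℂ), y)))
      ⟨hmem s hs, hF.mem _ hyΩ⟩).comp_hasDerivWithinAt (f := fun s : ℝ => (t - s, F ((s : ℂ), y))) s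
      (h4.prodMk h3).hasDerivWithinAt fun u hu => ⟨hmem u hu, hF.mem _ hyΩ⟩
  have hbd : ∀ s ∈ Ico (0 : ℝ) (t - t'), ‖E ((t - s, s), y)‖ ≤ δ := by
    intro s hs
    refine (hrE ?_ y hy ⟨⟨hmem s (Ico_subset_Icc_self hs), mem_univ _⟩, hyΩ⟩).le
    rw [Prod.dist_eq, max_lt_iff, Real.dist_eq, Real.dist_eq, abs_lt, abs_lt]
    simp only
    refine ⟨⟨?_, ?_⟩, ?_, ?_⟩ <;> linarith [hs.1, hs.2]
  have h5 := norm_image_sub_le_of_norm_deriv_le_segment' hder hbd (t - t')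
    ⟨by linarith, le_rfl⟩
  have h6 : F (((0 : ℝ) : ℂ), y) = y := by simpa using hF.2.2 y hyΩ
  simpa only [h6, sub_zero, sub_sub_cancel] using h5

/-- The time-one map of the isotopy is approximated on compact sets by the time-one map of a
family: the local steps are composed along a subdivision of `[0, 1]`, and the image under
`θ (t, ·)` of the point reached is followed while `t` decreases from `1` to `0`. -/
lemma exists_family {θ : ℝ × E2 → E2} (hθ : ContDiffOn ℝ 2 θ Cyl)
    (hA : ∀ t ∈ Icc (0 : ℝ) 1, IsAutOn OmegaStar (fun z => θ (t, z)))
    (h0 : ∀ z ∈ OmegaStar, θ (0, z) = z) {K : Set E2} (hK : IsCompact K) (hKΩ : K ⊆ OmegaStar)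
    {ε : ℝ} (hε : 0 < ε) :
    ∃ F, IsFam F ∧ ∀ x ∈ K, ‖F (1, x) - θ (1, x)‖ < ε := by
  have h1I : (1 : ℝ) ∈ Icc (0 : ℝ) 1 := ⟨zero_le_one, le_rfl⟩
  have hK1 : IsCompact ((fun x => θ (1, x)) '' K) := by
    refine hK.image_of_continuousOn ?_
    exact ((hA 1 h1I).1.continuousOn).mono hKΩ
  have hK1Ω : (fun x => θ (1, x)) '' K ⊆ OmegaStar := by
    rintro _ ⟨x, hx, rfl⟩
    exact (hA 1 h1I).2.1 (hKΩ hx)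
  obtain ⟨d, hd, hdΩ⟩ := hK1.exists_cthickening_subset_open isOpen_omega hK1Ω
  obtain ⟨L, hL, hLΩ, hLC⟩ := exists_compact hθ hA hK1.cthickening hdΩ
  set δ := min d (ε / 2) with hδdef
  have hδ : 0 < δ := by positivity
  have hstep := fun t₀ : unitInterval => local_step hθ hA t₀.2 hL hLΩ hδ
  choose η hη G hG hGs using hstep
  obtain ⟨u, hu0, humono, ⟨N, hN⟩, hu⟩ := exists_monotone_Icc_subset_open_cover_unitInterval
    (c := fun i : unitInterval => Metric.ball i (η i)) (fun _ => Metric.isOpen_ball)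
    fun i _ => mem_iUnion.2 ⟨i, Metric.mem_ball_self (hη i)⟩
  have key : ∀ k n, n + k = N →
      ∃ F, IsFam F ∧ ∀ x ∈ K, ‖θ (u n, F (1, x)) - θ (1, x)‖ ≤ δ * (1 - u n) := by
    intro k
    induction k with
    | zero =>
      intro n hn
      refine ⟨_, isFam_id, fun x _ => ?_⟩
      rw [hN n (by omega)]
      simp
    | succ k ih =>
      intro n hn
      obtain ⟨F, hF, hFK⟩ := ih (n + 1) (by omega)
      obtain ⟨i, hi⟩ := hu n
      have hle : u n ≤ u (n + 1) := humono (Nat.le_succ n)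
      have ht := hi ⟨hle, le_rfl⟩
      have ht' := hi ⟨le_rfl, hle⟩
      rw [Metric.mem_ball, Subtype.dist_eq, Real.dist_eq] at ht ht'
      set t : ℝ := (u (n + 1)).1 with htdef
      set t' : ℝ := (u n).1 with htdef'
      refine ⟨_, (hG i).comp hF (p := fun ζ => ((t - t' : ℝ) : ℂ) * ζ) (by fun_prop) (by simp),
        fun x hx => ?_⟩
      have hy : F (1, x) ∈ OmegaStar := hF.mem 1 (hKΩ hx)
      have hyL : F (1, x) ∈ L := by
        refine hLC t (u (n + 1)).2 _ hy ?_
        refine Metric.mem_cthickening_of_dist_le _ _ d _ (mem_image_of_mem _ hx) ?_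
        rw [dist_eq_norm]
        have h2 : δ ≤ d := min_le_left _ _
        have h3 : (0 : ℝ) ≤ t := (u (n + 1)).2.1
        nlinarith [hFK x hx]
      have h4 := hGs i t (u (n + 1)).2 t' (u n).2 ht ht' hle _ hyL
      have h5 := hFK x hx
      simp only [mul_one]
      have h6 := norm_sub_le_norm_sub_add_norm_sub
        (θ (t', G i (((t - t' : ℝ) : ℂ), F (1, x)))) (θ (t, F (1, x))) (θ (1, x))
      linarith
  obtain ⟨F, hF, hFK⟩ := key N 0 (by omega)
  refine ⟨F, hF, fun x hx => ?_⟩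
  have h1 := hFK x hx
  rw [hu0] at h1
  rw [Set.Icc.coe_zero, sub_zero, mul_one] at h1
  rw [h0 _ (hF.mem 1 (hKΩ hx))] at h1
  have : δ ≤ ε / 2 := min_le_right _ _
  linarith

/-! ### Interpolation -/

/-- Finitely many families are glued by composing them after reparametrization by the Lagrange
interpolation polynomials of the nodes `0` and `a j`. -/
lemma exists_interpolation {k : ℕ} {a : Fin k → ℂ} (ha : Function.Injective a)
    (ha0 : ∀ j, a j ≠ 0) {F : Fin k → ℂ × E2 → E2} (hF : ∀ j, IsFam (F j)) (s : Finset (Fin k)) :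
    ∃ Ψ, IsFam Ψ ∧ (∀ j ∈ s, ∀ x ∈ OmegaStar, Ψ (a j, x) = F j (1, x)) ∧
      ∀ j ∉ s, ∀ x ∈ OmegaStar, Ψ (a j, x) = x := by
  induction s using Finset.induction_on with
  | empty => exact ⟨_, isFam_id, by simp, fun _ _ _ _ => rfl⟩
  | insert i s hi ih =>
    obtain ⟨Ψ, hΨ, h1, h2⟩ := ih
    set p : ℂ → ℂ := fun ζ =>
      ζ / a i * ∏ j ∈ Finset.univ.erase i, (ζ - a j) / (a i - a j) with hp
    have hpd : Differentiable ℂ p := by fun_prop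
    have hp0 : p 0 = 0 := by simp [hp]
    have hpi : p (a i) = 1 := by
      simp only [hp]
      rw [div_self (ha0 i), one_mul]
      refine Finset.prod_eq_one fun j hj => div_self (sub_ne_zero.2 fun h => ?_)
      exact (Finset.mem_erase.1 hj).1 (ha h).symm
    have hpj : ∀ j, j ≠ i → p (a j) = 0 := fun j hj => by
      simp only [hp]
      rw [Finset.prod_eq_zero (Finset.mem_erase.2 ⟨hj, Finset.mem_univ j⟩) (by simp), mul_zero]
    refine ⟨_, (hF i).comp hΨ hpd hp0, fun j hj x hx => ?_, fun j hj x hx => ?_⟩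
    · simp only
      by_cases hji : j = i
      · subst hji
        rw [hpi, h2 j hi x hx]
      · rw [hpj j hji, (hF i).2.2 _ (hΨ.mem _ hx), h1 j (Finset.mem_of_mem_insert_of_ne hj hji) x hx]
    · simp only
      rw [Finset.mem_insert, not_or] at hj
      rw [hpj j hj.1, (hF i).2.2 _ (hΨ.mem _ hx), h2 j hj.2 x hx]

/-- Automorphisms `ψ₁,…,ψ_k` of `Ω = ℂ*×ℂ` that are connected to the identity by `C²`
paths of automorphisms can be simultaneously approximated, at any prescribed distinct
nonzero points `a₁,…,a_k` of ℂ, by an entire curve `ζ ↦ Ψ(ζ,·)` of automorphisms of `Ω`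
with `Ψ(0,·) = id`. -/
theorem stmt1 (k : ℕ) (ψ : Fin k → E2 → E2) (hψ : ∀ j, IsAutOn OmegaStar (ψ j))
    (θ : Fin k → ℝ × E2 → E2)
    (hθC2 : ∀ j, ContDiffOn ℝ 2 (θ j) (Icc (0 : ℝ) 1 ×ˢ OmegaStar))
    (hθaut : ∀ j, ∀ t ∈ Icc (0 : ℝ) 1, IsAutOn OmegaStar (fun z => θ j (t, z)))
    (hθ0 : ∀ j, ∀ z ∈ OmegaStar, θ j (0, z) = z)
    (hθ1 : ∀ j, ∀ z ∈ OmegaStar, θ j (1, z) = ψ j z)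
    (a : Fin k → ℂ) (ha : Function.Injective a) (ha0 : ∀ j, a j ≠ 0)
    (K : Set E2) (hK : IsCompact K) (hKΩ : K ⊆ OmegaStar)
    (ε : ℝ) (hε : 0 < ε) :
    ∃ Ψ : ℂ × E2 → E2,
      DifferentiableOn ℂ Ψ ((univ : Set ℂ) ×ˢ OmegaStar) ∧
      MapsTo Ψ ((univ : Set ℂ) ×ˢ OmegaStar) OmegaStar ∧
      (∀ ζ : ℂ, IsAutOn OmegaStar (fun z => Ψ (ζ, z))) ∧
      (∀ z ∈ OmegaStar, Ψ (0, z) = z) ∧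
      (∀ j, ∀ x ∈ K, ‖Ψ (a j, x) - ψ j x‖ < ε) := by
  have h := fun j => exists_family (hθC2 j) (hθaut j) (hθ0 j) hK hKΩ hε
  choose F hF hFK using h
  obtain ⟨Ψ, hΨ, h1, -⟩ := exists_interpolation ha ha0 hF Finset.univ
  refine ⟨Ψ, hΨ.1.differentiableOn one_ne_zero, hΨ.mapsTo, hΨ.2.1, hΨ.2.2, fun j x hx => ?_⟩
  rw [h1 j (Finset.mem_univ j) x (hKΩ hx), ← hθ1 j x (hKΩ hx)]
  exact hFK j x hx
end
end

section
/- Let n ≥ 2 and Ω = ℂⁿ. Let ψ₁,…,ψ_k be holomorphic automorphisms of ℂⁿ such that for each j = 1,…,k there is a map θ_j : [0,1] × ℂⁿ → ℂⁿ of class C² (in all real variables jointly) with θ_j(t,·) a holomorphic automorphism of ℂⁿ for every t ∈ [0,1], θ_j(0,·) = id, and θ_j(1,·) = ψ_j. Then for any distinct points a₁,…,a_k ∈ ℂ∖{0}, any compact set K ⊂ ℂⁿ, and any ε > 0, there exists a holomorphic map Ψ : ℂ × ℂⁿ → ℂⁿ such that: (i) Ψ(ζ,·) is a holomorphic automorphism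 of ℂⁿ for every ζ ∈ ℂ; (ii) Ψ(0,·) = id; and (iii) sup_{x∈K} ‖Ψ(a_j,x) − ψ_j(x)‖ < ε for j = 1,…,k. -/
/-! The curve joining each `ψ j` to the identity can be written down explicitly on `ℂⁿ`, so the
interpolation is exact and no approximation theory is needed.

If `χ` is an automorphism with `χ 0 = 0` and `Dχ(0) = id`, then `(ζ, z) ↦ χ(ζ z) / ζ` extends over
`ζ = 0` by the identity to an entire family of automorphisms joining the identity to `χ`
(`differentiable_dslope_smul`, `reachable_of_tangent_id`). A general automorphism is such a `χ`
followed by an invertible linear map and a translation. Invertible matrices are products of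
diagonal matrices and transvections, each lying on a holomorphic one-parameter group
(`reachable_mulVec`), and translations clearly do too. Hence for every `ψ j` there is an entire
curve of automorphisms `Φ j` with `Φ j (0, ·) = id` and `Φ j (1, ·) = ψ j` (`reachable_of_isAutCn`).
Reparametrizing `Φ j` by a Lagrange polynomial equal to `1` at `a j` and to `0` at `0` and at the
other `a i`, and composing over `j`, gives a curve passing through every `ψ j` at time `a j`
(`exists_curve_interpolating`). -/

open Set

noncomputable section

/-- `f` is a holomorphic automorphism of ℂⁿ: bijective, holomorphic, with holomorphic
inverse. -/
def IsAutCn (n : ℕ) (f : EuclideanSpace ℂ (Fin n) → EuclideanSpace ℂ (Fin n)) : Prop :=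
  Differentiable ℂ f ∧
  ∃ g : EuclideanSpace ℂ (Fin n) → EuclideanSpace ℂ (Fin n),
    Differentiable ℂ g ∧ Function.LeftInverse g f ∧ Function.RightInverse g f

/-! ### Blow-up of a holomorphic map at a point -/

section removable
open Filter Topology

variable {E : Type*} [NormedAddCommGroup E] [NormedSpace ℂ E]

lemma dslope_smul_zero {χ : E → E} (hχ : Differentiable ℂ χ) (x : E) :
    dslope (fun ζ : ℂ => χ (ζ • x)) 0 0 = fderiv ℂ χ 0 x := by
  rw [dslope_same]
  have h : HasFDerivAt χ (fderiv ℂ χ 0) ((0 : ℂ) • x) := by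
    rw [zero_smul]; exact (hχ 0).hasFDerivAt
  have h2 : HasDerivAt (fun ζ : ℂ => ζ • x) x 0 := by
    simpa using (hasDerivAt_id (0 : ℂ)).smul_const x
  exact (h.comp_hasDerivAt (0 : ℂ) h2).deriv

variable [CompleteSpace E]

/-- Away from `ζ = 0` this is continuity of a quotient; at `ζ = 0` the maximum principle on the
unit disc bounds the difference of two divided differences by its supremum on the unit circle,
where continuity in the parameter is uniform by compactness. -/
lemma continuous_dslope_param {G : ℂ × E → E} (hG : Continuous G)
    (hol : ∀ x, Differentiable ℂ fun ζ => G (ζ, x)) :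
    Continuous fun p : ℂ × E => dslope (fun ζ => G (ζ, p.2)) 0 p.1 := by
  have hd : ∀ x, Differentiable ℂ (dslope (fun ζ => G (ζ, x)) 0) := fun x => by
    rw [← differentiableOn_univ, Complex.differentiableOn_dslope univ_mem, differentiableOn_univ]
    exact hol x
  rw [continuous_iff_continuousAt]
  rintro ⟨ζ₀, x₀⟩
  by_cases hζ : ζ₀ = 0
  · subst hζ
    rw [Metric.continuousAt_iff']
    intro ε hε
    have hN : Continuous fun q : ℂ × E =>
        ‖(G (q.1, q.2) - G (0, q.2)) - (G (q.1, x₀) - G (0, x₀))‖ := by fun_prop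
    have h1 : ∀ᶠ x in 𝓝 x₀, ∀ w ∈ Metric.sphere (0 : ℂ) 1,
        ‖(G (w, x) - G (0, x)) - (G (w, x₀) - G (0, x₀))‖ < ε / 2 := by
      refine (isCompact_sphere (0 : ℂ) 1).eventually_forall_of_forall_eventually ?_
      intro w _
      have := (hN.comp continuous_swap).continuousAt.eventually_lt
        (x₀ := (x₀, w)) (continuousAt_const (y := ε / 2)) (by simpa using hε)
      exact this
    have h2 : ∀ᶠ ζ in 𝓝 (0 : ℂ), dist (dslope (fun ζ => G (ζ, x₀)) 0 ζ)
        (dslope (fun ζ => G (ζ, x₀)) 0 0) < ε / 2 :=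
      Metric.continuousAt_iff'.1 (hd x₀).continuous.continuousAt _ (half_pos hε)
    have h3 : ∀ᶠ ζ in 𝓝 (0 : ℂ), ζ ∈ Metric.ball (0 : ℂ) 1 := Metric.ball_mem_nhds _ one_pos
    rw [nhds_prod_eq]
    filter_upwards [(h2.and h3).prod_mk h1]
    rintro ⟨ζ, x⟩ ⟨⟨h2, h3⟩, h1⟩
    have key : ‖dslope (fun ζ => G (ζ, x)) 0 ζ - dslope (fun ζ => G (ζ, x₀)) 0 ζ‖ ≤ ε / 2 := by
      refine Complex.norm_le_of_forall_mem_frontier_norm_le (U := Metric.ball (0 : ℂ) 1)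
        (f := fun ζ => dslope (fun ζ => G (ζ, x)) 0 ζ - dslope (fun ζ => G (ζ, x₀)) 0 ζ)
        Metric.isBounded_ball ((hd x).sub (hd x₀)).diffContOnCl ?_ (subset_closure h3)
      intro w hw
      rw [frontier_ball _ one_ne_zero] at hw
      have hw1 : ‖w‖ = 1 := by simpa using hw
      have hw0 : w ≠ 0 := by rintro rfl; simp at hw1
      have := (h1 w hw).le
      simpa [dslope_of_ne _ hw0, slope_def_module, ← smul_sub, norm_smul, hw1] using this
    calc dist _ _ ≤ dist (dslope (fun ζ => G (ζ, x)) 0 ζ) (dslope (fun ζ => G (ζ, x₀)) 0 ζ)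
          + dist (dslope (fun ζ => G (ζ, x₀)) 0 ζ) (dslope (fun ζ => G (ζ, x₀)) 0 0) :=
            dist_triangle _ _ _
      _ < ε := by rw [dist_eq_norm]; linarith
  · have hc : ContinuousAt (fun p : ℂ × E => p.1⁻¹ • (G (p.1, p.2) - G (0, p.2))) (ζ₀, x₀) := by
      refine ContinuousAt.smul (continuousAt_fst.inv₀ hζ) ?_
      fun_prop
    refine hc.congr ?_
    filter_upwards [continuousAt_fst.eventually_ne hζ] with p hp
    simp [dslope_of_ne _ hp, slope_def_module]

/-- The blow-up `(ζ, x) ↦ (χ (ζ x) - χ 0) / ζ`, extended by `Dχ(0)` at `ζ = 0`, is entire. At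
`ζ = 0` it has the form `Dχ(0) x + ζ H(ζ, x)` with `H`, a second divided difference, continuous. -/
lemma differentiable_dslope_smul {χ : E → E} (hχ : Differentiable ℂ χ) :
    Differentiable ℂ fun p : ℂ × E => dslope (fun ζ : ℂ => χ (ζ • p.2)) 0 p.1 := by
  set Φ : ℂ × E → E := fun p => dslope (fun ζ : ℂ => χ (ζ • p.2)) 0 p.1 with hΦ
  have hol : ∀ x, Differentiable ℂ fun ζ : ℂ => χ (ζ • x) := fun x =>
    hχ.comp (differentiable_id.smul_const x)
  have hΦc : Continuous Φ :=
    continuous_dslope_param (G := fun p => χ (p.1 • p.2))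
      (hχ.continuous.comp (continuous_fst.smul continuous_snd)) hol
  have hΦd : ∀ x, Differentiable ℂ fun ζ => Φ (ζ, x) := fun x => by
    have := (Complex.differentiableOn_dslope (f := fun ζ : ℂ => χ (ζ • x)) (c := 0)
      univ_mem).2 (hol x).differentiableOn
    exact differentiableOn_univ.1 this
  have hHc := continuous_dslope_param hΦc hΦd
  set H : ℂ × E → E := fun p => dslope (fun ζ => Φ (ζ, p.2)) 0 p.1 with hH
  rintro ⟨ζ₀, x₀⟩
  by_cases hζ : ζ₀ = 0
  · subst hζ
    have hform : Φ = fun p => fderiv ℂ χ 0 p.2 + p.1 • H p := by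
      funext p
      have h := sub_smul_dslope (fun ζ => Φ (ζ, p.2)) 0 p.1
      have h0 : Φ (0, p.2) = fderiv ℂ χ 0 p.2 := dslope_smul_zero hχ p.2
      simp only [sub_zero] at h
      rw [← h0, hH]
      simp only
      rw [h]; simp
    rw [hform]
    refine DifferentiableAt.add (by fun_prop) ?_
    have : HasFDerivAt (fun p : ℂ × E => p.1 • H p)
        ((ContinuousLinearMap.fst ℂ ℂ E).smulRight (H (0, x₀))) (0, x₀) := by
      rw [hasFDerivAt_iff_isLittleO]
      have h1 : (fun p : ℂ × E => H p - H (0, x₀)) =o[𝓝 (0, x₀)] (fun _ => (1 : ℝ)) := by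
        rw [Asymptotics.isLittleO_one_iff]
        have := (hHc.tendsto (0, x₀)).sub_const (H (0, x₀))
        simpa using this
      have h2 : (fun p : ℂ × E => p.1) =O[𝓝 (0, x₀)] (fun p => p - (0, x₀)) :=
        Asymptotics.isBigO_of_le _ fun p => by
          have := norm_fst_le (p - (0, x₀)); simpa using this
      have h3 := h2.norm_right.smul_isLittleO h1
      refine (Asymptotics.isLittleO_norm_right.1 (h3.congr ?_ ?_))
      · intro p; simp [smul_sub]
      · intro p; simp
    exact this.differentiableAt
  · have hc : DifferentiableAt ℂ (fun p : ℂ × E => p.1⁻¹ • (χ (p.1 • p.2) - χ 0)) (ζ₀, x₀) := by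
      refine DifferentiableAt.smul (differentiableAt_fst.inv hζ) ?_
      refine DifferentiableAt.sub_const ?_ _
      exact (hχ _).comp _ (differentiableAt_fst.smul differentiableAt_snd)
    refine hc.congr_of_eventuallyEq ?_
    filter_upwards [continuousAt_fst.eventually_ne hζ] with p hp
    simp [hΦ, dslope_of_ne _ hp, slope_def_module]

end removable

/-! ### Entire curves of automorphisms -/

section curves
variable {n : ℕ}

local notation "V" => EuclideanSpace ℂ (Fin n)

lemma IsAutCn.id : IsAutCn n (fun z => z) :=
  ⟨differentiable_id, fun z => z, differentiable_id, fun _ => rfl, fun _ => rfl⟩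

lemma IsAutCn.comp {f g : V → V} (hf : IsAutCn n f) (hg : IsAutCn n g) :
    IsAutCn n (fun z => f (g z)) := by
  obtain ⟨hf, f', hf', hf1, hf2⟩ := hf
  obtain ⟨hg, g', hg', hg1, hg2⟩ := hg
  exact ⟨hf.comp hg, g' ∘ f', hg'.comp hf', hf1.comp hg1, hf2.comp hg2⟩

/-- `Ψ` is an entire curve `ζ ↦ Ψ(ζ, ·)` of automorphisms of `ℂⁿ` starting at the identity;
entire means jointly holomorphic in `(ζ, z)`. -/
def IsAutCurve (n : ℕ) (Ψ : ℂ × EuclideanSpace ℂ (Fin n) → EuclideanSpace ℂ (Fin n)) : Prop :=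
  Differentiable ℂ Ψ ∧ (∀ ζ : ℂ, IsAutCn n (fun z => Ψ (ζ, z))) ∧ ∀ z, Ψ (0, z) = z

/-- `ψ` is the time-one map of some entire curve of automorphisms starting at the identity. -/
def Reachable (n : ℕ) (ψ : EuclideanSpace ℂ (Fin n) → EuclideanSpace ℂ (Fin n)) : Prop :=
  ∃ Ψ, IsAutCurve n Ψ ∧ ∀ z, Ψ (1, z) = ψ z

lemma IsAutCurve.comp {Φ Ψ : ℂ × V → V} (hΦ : IsAutCurve n Φ) (hΨ : IsAutCurve n Ψ) :
    IsAutCurve n (fun p => Φ (p.1, Ψ p)) :=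
  ⟨hΦ.1.comp (differentiable_fst.prodMk hΨ.1), fun ζ => (hΦ.2.1 ζ).comp (hΨ.2.1 ζ),
    fun z => by simp only [hΨ.2.2, hΦ.2.2]⟩

lemma IsAutCurve.reparam {Φ : ℂ × V → V} (hΦ : IsAutCurve n Φ) {p : ℂ → ℂ}
    (hp : Differentiable ℂ p) (hp0 : p 0 = 0) : IsAutCurve n (fun q => Φ (p q.1, q.2)) :=
  ⟨hΦ.1.comp ((hp.comp differentiable_fst).prodMk differentiable_snd), fun ζ => hΦ.2.1 (p ζ),
    fun z => by simp only [hp0, hΦ.2.2]⟩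

lemma Reachable.comp {f g : V → V} (hf : Reachable n f) (hg : Reachable n g) :
    Reachable n (fun z => f (g z)) := by
  obtain ⟨Φ, hΦ, h1⟩ := hf
  obtain ⟨Ψ, hΨ, h2⟩ := hg
  exact ⟨_, hΦ.comp hΨ, fun z => by simp only [h1, h2]⟩

lemma reachable_add_const (c : V) : Reachable n (fun z => z + c) := by
  refine ⟨fun p => p.2 + p.1 • c, ⟨by fun_prop, fun ζ => ⟨by fun_prop, fun z => z - ζ • c,
    by fun_prop, fun z => by simp, fun z => by simp⟩, by simp⟩, by simp⟩

/-- A one-parameter matrix group `A` with holomorphic entries gives an entire curve of linear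
automorphisms, the inverse of `A ζ` being `A (-ζ)`. -/
lemma reachable_of_group (A : ℂ → Matrix (Fin n) (Fin n) ℂ)
    (hA : ∀ i j, Differentiable ℂ fun ζ => A ζ i j) (h0 : A 0 = 1)
    (hinv : ∀ ζ, A (-ζ) * A ζ = 1) :
    Reachable n (fun z => WithLp.toLp 2 ((A 1).mulVec z.ofLp)) := by
  have hinv' : ∀ ζ, A ζ * A (-ζ) = 1 := fun ζ => by simpa using hinv (-ζ)
  have hd : Differentiable ℂ fun p : ℂ × V => (WithLp.toLp 2 ((A p.1).mulVec p.2.ofLp) : V) := by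
    rw [differentiable_euclidean]
    intro i
    simp only [Matrix.mulVec, dotProduct]
    refine Differentiable.fun_sum fun j _ => ?_
    exact ((hA i j).comp differentiable_fst).mul (by fun_prop)
  have hd' : ∀ ζ, Differentiable ℂ fun z : V => (WithLp.toLp 2 ((A ζ).mulVec z.ofLp) : V) :=
    fun ζ => hd.comp ((differentiable_const ζ).prodMk differentiable_id)
  refine ⟨fun p => WithLp.toLp 2 ((A p.1).mulVec p.2.ofLp), ⟨hd, fun ζ => ⟨hd' ζ, _, hd' (-ζ),
    fun z => ?_, fun z => ?_⟩, fun z => ?_⟩, fun z => rfl⟩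
  · simp [hinv]
  · simp [hinv']
  · simp [h0]

/-- Over `ℂ` an invertible matrix is a product of transvections `1 + c Eᵢⱼ` and an invertible
diagonal matrix, each of which lies on a one-parameter group. -/
lemma reachable_mulVec (M : Matrix (Fin n) (Fin n) ℂ) (hM : M.det ≠ 0) :
    Reachable n (fun z => WithLp.toLp 2 (M.mulVec z.ofLp)) := by
  refine Matrix.diagonal_transvection_induction_of_det_ne_zero
    (fun M => Reachable n (fun z => WithLp.toLp 2 (M.mulVec z.ofLp))) M hM ?_ ?_ ?_
  · intro D hD
    have hD0 : ∀ i, D i ≠ 0 := by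
      simpa [Matrix.det_diagonal, Finset.prod_eq_zero_iff] using hD
    have := reachable_of_group
      (fun ζ => Matrix.diagonal fun i => Complex.exp (ζ * Complex.log (D i))) ?_ ?_ ?_
    · simpa [Complex.exp_log (hD0 _)] using this
    · intro i j
      by_cases h : i = j
      · subst h
        simp only [Matrix.diagonal_apply_eq]
        fun_prop
      · simp [Matrix.diagonal_apply_ne _ h]
    · simp
    · intro ζ
      simp [Matrix.diagonal_mul_diagonal, ← Complex.exp_add]
  · intro t
    have := reachable_of_group (fun ζ => Matrix.transvection t.i t.j (ζ * t.c)) ?_ ?_ ?_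
    · simpa [Matrix.TransvectionStruct.toMatrix] using this
    · intro i j
      simp only [Matrix.transvection, Matrix.add_apply, Matrix.single_apply]
      split_ifs <;> fun_prop
    · simp
    · intro ζ
      rw [Matrix.transvection_mul_transvection_same _ _ t.hij]
      simp
  · intro A B _ _ hA hB
    simpa [Matrix.mulVec_mulVec] using hA.comp hB

lemma reachable_clm (L L' : V →L[ℂ] V) (h : L * L' = 1) : Reachable n (fun z => L z) := by
  set e := Matrix.toEuclideanCLM (n := Fin n) (𝕜 := ℂ)
  have hM : (e.symm L).det ≠ 0 := by
    have h1 : e.symm L * e.symm L' = 1 := by rw [← map_mul, h, map_one]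
    intro h0
    have := congrArg Matrix.det h1
    simp [h0] at this
  have := reachable_mulVec (e.symm L) hM
  have hL : L = e (e.symm L) := (e.apply_symm_apply L).symm
  rw [hL]
  exact this

/-- A tangent-to-the-identity automorphism is joined to the identity by conjugating it with
dilations: `(ζ, z) ↦ χ(ζ z) / ζ`. -/
lemma reachable_of_tangent_id {χ : V → V} (hχ : IsAutCn n χ) (h0 : χ 0 = 0)
    (h1 : fderiv ℂ χ 0 = ContinuousLinearMap.id ℂ V) : Reachable n χ := by
  obtain ⟨hχd, g, hg, hl, hr⟩ := hχ
  have hz : ∀ z, dslope (fun ζ : ℂ => χ (ζ • z)) 0 0 = z := fun z => by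
    rw [dslope_smul_zero hχd, h1]; rfl
  have hne : ∀ ζ : ℂ, ζ ≠ 0 → ∀ z,
      dslope (fun ζ : ℂ => χ (ζ • z)) 0 ζ = ζ⁻¹ • χ (ζ • z) := fun ζ hζ z => by
    simp [dslope_of_ne _ hζ, slope_def_module, h0]
  refine ⟨fun p => dslope (fun ζ : ℂ => χ (ζ • p.2)) 0 p.1,
    ⟨differentiable_dslope_smul hχd, fun ζ => ?_, hz⟩, fun z => ?_⟩
  · by_cases hζ : ζ = 0
    · subst hζ
      simpa only [hz] using IsAutCn.id
    · simp only [hne ζ hζ]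
      refine ⟨(hχd.comp (differentiable_id.const_smul ζ)).const_smul ζ⁻¹,
        fun z => ζ⁻¹ • g (ζ • z), (hg.comp (differentiable_id.const_smul ζ)).const_smul ζ⁻¹,
        fun z => ?_, fun z => ?_⟩
      · simp [smul_smul, hζ, hl _]
      · simp [smul_smul, hζ, hr _]
  · simp [hne 1 one_ne_zero]

/-- Write `ψ` as translation ∘ linear part ∘ an automorphism tangent to the identity at `0`. -/
lemma reachable_of_isAutCn {ψ : V → V} (hψ : IsAutCn n ψ) : Reachable n ψ := by
  obtain ⟨hd, g, hg, hl, hr⟩ := hψ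
  set L := fderiv ℂ ψ 0 with hL
  set L' := fderiv ℂ g (ψ 0) with hL'
  have hψ0 : HasFDerivAt ψ L 0 := (hd 0).hasFDerivAt
  have hg0 : HasFDerivAt g L' (ψ 0) := (hg _).hasFDerivAt
  have h1 : L' ∘L L = ContinuousLinearMap.id ℂ V := by
    have h := hg0.comp (0 : V) hψ0
    rw [hl.comp_eq_id] at h
    exact h.unique (hasFDerivAt_id _)
  have h2 : L ∘L L' = ContinuousLinearMap.id ℂ V := by
    have h := HasFDerivAt.comp (g := ψ) (f := g) (ψ 0) (by rw [hl 0]; exact hψ0) hg0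
    rw [hr.comp_eq_id] at h
    exact h.unique (hasFDerivAt_id _)
  have h1' : ∀ z, L' (L z) = z := fun z => congrArg (fun T => T z) h1
  have h2' : ∀ z, L (L' z) = z := fun z => congrArg (fun T => T z) h2
  have hχ : Reachable n (fun z => L' (ψ z - ψ 0)) := by
    refine reachable_of_tangent_id ⟨L'.differentiable.comp (hd.sub_const _),
      fun z => g (L z + ψ 0), hg.comp (L.differentiable.add_const _), fun z => ?_, fun z => ?_⟩
      (by simp) ?_
    · simp [h2', hl z]
    · simp [hr _, h1']
    · have := L'.hasFDerivAt.comp (0 : V) (hψ0.sub_const (ψ 0))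
      rw [← h1]
      exact this.fderiv
  have := (reachable_add_const (ψ 0)).comp ((reachable_clm L L' h2).comp hχ)
  simpa [h2'] using this

end curves

/-! ### Interpolation -/

/-- Composing the curves through the `ψ j`, each reparametrized by a polynomial taking the value
`1` at `a j` and `0` at `0` and the other `a i`, interpolates all the `ψ j` exactly. -/
lemma exists_curve_interpolating {n k : ℕ}
    {ψ : Fin k → EuclideanSpace ℂ (Fin n) → EuclideanSpace ℂ (Fin n)}
    (hψ : ∀ j, Reachable n (ψ j)) {a : Fin k → ℂ} (ha : Function.Injective a)
    (ha0 : ∀ j, a j ≠ 0) (s : Finset (Fin k)) :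
    ∃ Ψ, IsAutCurve n Ψ ∧ (∀ j ∈ s, ∀ z, Ψ (a j, z) = ψ j z) ∧ ∀ j ∉ s, ∀ z, Ψ (a j, z) = z := by
  induction s using Finset.induction_on with
  | empty => exact ⟨fun p => p.2, ⟨differentiable_snd, fun _ => IsAutCn.id, fun _ => rfl⟩,
      by simp, by simp⟩
  | insert j s hj ih =>
    obtain ⟨Ψ, hΨ, hs, hns⟩ := ih
    obtain ⟨Φ, hΦ, hΦ1⟩ := hψ j
    set p : ℂ → ℂ := fun ζ => ζ / a j * ∏ i ∈ Finset.univ.erase j, (ζ - a i) / (a j - a i) with hp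
    have hpd : Differentiable ℂ p := by
      refine (differentiable_id.div_const _).mul (Differentiable.fun_finsetProd fun i _ => ?_)
      fun_prop
    have hp0 : p 0 = 0 := by simp [hp]
    have hpj : p (a j) = 1 := by
      simp only [hp, div_self (ha0 j), one_mul]
      refine Finset.prod_eq_one fun i hi => div_self (sub_ne_zero.2 fun h => ?_)
      exact (Finset.ne_of_mem_erase hi) (ha h).symm
    have hpi : ∀ i, i ≠ j → p (a i) = 0 := fun i hi => by
      simp only [hp]
      rw [Finset.prod_eq_zero (i := i) (by simp [hi]) (by simp), mul_zero]
    refine ⟨_, (hΦ.reparam hpd hp0).comp hΨ, fun i hi z => ?_, fun i hi z => ?_⟩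
    · rcases Finset.mem_insert.1 hi with rfl | his
      · simp [hpj, hns _ hj, hΦ1]
      · have hij : i ≠ j := fun h => hj (h ▸ his)
        simp [hpi i hij, hΦ.2.2, hs i his]
    · rw [Finset.mem_insert, not_or] at hi
      simp [hpi i hi.1, hΦ.2.2, hns i hi.2]

/-- Automorphisms `ψ₁,…,ψ_k` of ℂⁿ (`n ≥ 2`) that are connected to the identity by `C²`
paths of automorphisms can be simultaneously approximated, at any prescribed distinct
nonzero points `a₁,…,a_k` of ℂ, by an entire curve `ζ ↦ Ψ(ζ,·)` of automorphisms of ℂⁿ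
with `Ψ(0,·) = id`. -/
theorem stmt2 (n : ℕ) (hn : 2 ≤ n) (k : ℕ)
    (ψ : Fin k → EuclideanSpace ℂ (Fin n) → EuclideanSpace ℂ (Fin n))
    (hψ : ∀ j, IsAutCn n (ψ j))
    (θ : Fin k → ℝ × EuclideanSpace ℂ (Fin n) → EuclideanSpace ℂ (Fin n))
    (hθC2 : ∀ j, ContDiffOn ℝ 2 (θ j) (Icc (0 : ℝ) 1 ×ˢ (univ : Set (EuclideanSpace ℂ (Fin n)))))
    (hθaut : ∀ j, ∀ t ∈ Icc (0 : ℝ) 1, IsAutCn n (fun z => θ j (t, z)))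
    (hθ0 : ∀ j z, θ j (0, z) = z)
    (hθ1 : ∀ j z, θ j (1, z) = ψ j z)
    (a : Fin k → ℂ) (ha : Function.Injective a) (ha0 : ∀ j, a j ≠ 0)
    (K : Set (EuclideanSpace ℂ (Fin n))) (hK : IsCompact K)
    (ε : ℝ) (hε : 0 < ε) :
    ∃ Ψ : ℂ × EuclideanSpace ℂ (Fin n) → EuclideanSpace ℂ (Fin n),
      Differentiable ℂ Ψ ∧
      (∀ ζ : ℂ, IsAutCn n (fun z => Ψ (ζ, z))) ∧
      (∀ z, Ψ (0, z) = z) ∧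
      (∀ j, ∀ x ∈ K, ‖Ψ (a j, x) - ψ j x‖ < ε) := by
  obtain ⟨Ψ, ⟨hd, haut, h0⟩, hΨ, -⟩ :=
    exists_curve_interpolating (fun j => reachable_of_isAutCn (hψ j)) ha ha0 Finset.univ
  refine ⟨Ψ, hd, haut, h0, fun j x _ => ?_⟩
  simpa [hΨ j (Finset.mem_univ j) x] using hε
end
end
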